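/- arXiv:2008.05430 — 3 statements merged into one kernel-verified Lean document; each statement's English description precedes it below -/
import Mathlib

section
/- Suppose X ≠ ∅. Then for every vertex v of G: Pr[φ ∈ 𝒮 and φ(I ∪ O) ∩ X ≠ ∅ | φ(c) = v] ≤ λ₁ · ρ_X(v) · (1 − D)^{m−1}. -/
open scoped BigOperators

/-- The arc relation of the oriented star `S_{k,l}` on `Fin (k+l+1)`:
vertex `0` is the center, vertices `1,…,k` are the out-leaves and
vertices `k+1,…,k+l` are the in-leaves. -/
def StarArc (k l : ℕ) (a b : Fin (k + l + 1)) : Prop :=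
  (a.val = 0 ∧ 1 ≤ b.val ∧ b.val ≤ k) ∨ (b.val = 0 ∧ k + 1 ≤ a.val)

/-- `φ` witnesses an induced copy of `S_{k,l}` in the digraph with arc relation `A`:
it is injective and maps arcs to arcs and non-arcs to non-arcs. -/
def IsStarEmb (k l : ℕ) {V : Type*} (A : V → V → Prop) (φ : Fin (k + l + 1) → V) : Prop :=
  Function.Injective φ ∧ ∀ a b, StarArc k l a b ↔ A (φ a) (φ b)

/-- `s(G)`: the probability that a uniformly random map `V(S_{k,l}) → V(G)`
induces a copy of `S_{k,l}`. -/
noncomputable def starProb (k l : ℕ) (V : Type*) [Fintype V] (A : V → V → Prop) : ℝ :=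
  (Nat.card {φ : Fin (k + l + 1) → V // IsStarEmb k l A φ} : ℝ) /
    (Fintype.card V : ℝ) ^ (k + l + 1)

/-- The probability that a uniformly random map induces a copy of `S_{k,l}`
and moreover has property `P`. -/
noncomputable def starProbOn (k l : ℕ) {V : Type*} [Fintype V] (A : V → V → Prop)
    (P : (Fin (k + l + 1) → V) → Prop) : ℝ :=
  (Nat.card {φ : Fin (k + l + 1) → V // IsStarEmb k l A φ ∧ P φ} : ℝ) /
    (Fintype.card V : ℝ) ^ (k + l + 1)

/-- `s(z→v) = Pr[φ ∈ 𝒮 | φ z = v]`. -/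
noncomputable def sCond (k l : ℕ) {V : Type*} [Fintype V] (A : V → V → Prop)
    (z : Fin (k + l + 1)) (v : V) : ℝ :=
  (Nat.card {φ : Fin (k + l + 1) → V // IsStarEmb k l A φ ∧ φ z = v} : ℝ) /
    (Fintype.card V : ℝ) ^ (k + l)

/-- `Pr[φ ∈ 𝒮 ∧ P φ | φ(c) = v]`, where `c = 0` is the center of the star. -/
noncomputable def sCondOn (k l : ℕ) {V : Type*} [Fintype V] (A : V → V → Prop) (v : V)
    (P : (Fin (k + l + 1) → V) → Prop) : ℝ :=
  (Nat.card {φ : Fin (k + l + 1) → V // IsStarEmb k l A φ ∧ φ 0 = v ∧ P φ} : ℝ) /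
    (Fintype.card V : ℝ) ^ (k + l)

/-- `s(v) = (s(c→v) + l·s(i→v) + k·s(o→v))/(m+1)`, where the center is `0`,
`k+1` is an in-leaf and `1` is an out-leaf. -/
noncomputable def sVert (k l : ℕ) {V : Type*} [Fintype V] (A : V → V → Prop) (v : V) : ℝ :=
  (sCond k l A 0 v + l * sCond k l A (Fin.ofNat (k + l + 1) (k + 1)) v
      + k * sCond k l A 1 v) / ((k : ℝ) + l + 1)

/-- `ρ(v)`: the proportion of vertices adjacent to `v`. -/
noncomputable def rho {V : Type*} [Fintype V] (A : V → V → Prop) (v : V) : ℝ :=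
  (Nat.card {u : V // A v u ∨ A u v} : ℝ) / (Fintype.card V : ℝ)

/-- `ρ⁺_B(v)`: the proportion of vertices that are out-neighbours of `v` lying in `B`. -/
noncomputable def rhoPIn {V : Type*} [Fintype V] (A : V → V → Prop) (B : Set V) (v : V) : ℝ :=
  (Nat.card {u : V // A v u ∧ u ∈ B} : ℝ) / (Fintype.card V : ℝ)

/-- `ρ⁻_B(v)`: the proportion of vertices that are in-neighbours of `v` lying in `B`. -/
noncomputable def rhoMIn {V : Type*} [Fintype V] (A : V → V → Prop) (B : Set V) (v : V) : ℝ :=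
  (Nat.card {u : V // A u v ∧ u ∈ B} : ℝ) / (Fintype.card V : ℝ)

/-- `ρ_B(v)`: the proportion of vertices adjacent to `v` lying in `B`. -/
noncomputable def rhoIn {V : Type*} [Fintype V] (A : V → V → Prop) (B : Set V) (v : V) : ℝ :=
  (Nat.card {u : V // (A v u ∨ A u v) ∧ u ∈ B} : ℝ) / (Fintype.card V : ℝ)

/-- `μ(B) = |B|/n`. -/
noncomputable def muSet {V : Type*} [Fintype V] (B : Set V) : ℝ :=
  (Nat.card B : ℝ) / (Fintype.card V : ℝ)

/-- `X`: the set of vertices of large degree, `ρ(v) ≥ 1/2`. -/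
def bigX {V : Type*} [Fintype V] (A : V → V → Prop) : Set V := {v | 1 / 2 ≤ rho A v}

/-- `Y = V(G) \ X`. -/
def bigY {V : Type*} [Fintype V] (A : V → V → Prop) : Set V := (bigX A)ᶜ

/-- `α = μ(X)`. -/
noncomputable def alphaX {V : Type*} [Fintype V] (A : V → V → Prop) : ℝ := muSet (bigX A)

/-- `D = min_{x ∈ X} ρ(x)`. -/
noncomputable def Dmin {V : Type*} [Fintype V] (A : V → V → Prop) : ℝ :=
  sInf (rho A '' bigX A)

/-- `β = max_{y ∈ Y} ρ_Y(y)`. -/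
noncomputable def betaY {V : Type*} [Fintype V] (A : V → V → Prop) : ℝ :=
  sSup ((fun y => rhoIn A (bigY A) y) '' bigY A)

/-- `γ = min_{x ∈ X} ρ⁻_Y(x)`. -/
noncomputable def gammaX {V : Type*} [Fintype V] (A : V → V → Prop) : ℝ :=
  sInf ((fun x => rhoMIn A (bigY A) x) '' bigX A)

/-- `S = (m+1)·min_{v ∈ V(G)} s(v)`. -/
noncomputable def Smin (k l : ℕ) {V : Type*} [Fintype V] (A : V → V → Prop) : ℝ :=
  ((k : ℝ) + l + 1) * sInf (Set.range (sVert k l A))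

/-- `S₁ = min_{x ∈ X} (ρ⁺_Y(x))^k (ρ⁻_Y(x))^l`. -/
noncomputable def S1min (k l : ℕ) {V : Type*} [Fintype V] (A : V → V → Prop) : ℝ :=
  sInf ((fun x => rhoPIn A (bigY A) x ^ k * rhoMIn A (bigY A) x ^ l) '' bigX A)

/-- `S₂ = S₁ − ((m−1)/((m+1)·C(m,k)))·(α+β)(1−α)(1−D)^{m−2}`. -/
noncomputable def S2min (k l : ℕ) {V : Type*} [Fintype V] (A : V → V → Prop) : ℝ :=
  S1min k l A - (((k : ℝ) + l - 1) / (((k : ℝ) + l + 1) * (Nat.choose (k + l) k : ℝ)))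
    * (alphaX A + betaY A) * (1 - alphaX A) * (1 - Dmin A) ^ (k + l - 2)

/-- `λ₀ = k^k l^l / m^m`. -/
noncomputable def lam0 (k l : ℕ) : ℝ := (k : ℝ) ^ k * (l : ℝ) ^ l / ((k : ℝ) + l) ^ (k + l)

/-- `λ₁ = k^k l (l−1)^{l−1} / (m−1)^{m−1}` (with the convention `0⁰ = 1`). -/
noncomputable def lam1 (k l : ℕ) : ℝ :=
  (k : ℝ) ^ k * (l : ℝ) * ((l : ℝ) - 1) ^ (l - 1) / ((k : ℝ) + l - 1) ^ (k + l - 1)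

/-- The edge density `ρ(Z)` of a set of vertices `Z`: the number of unordered adjacent
pairs in `Z` divided by `C(|Z|,2)`. -/
noncomputable def densSet {V : Type*} [Fintype V] (A : V → V → Prop) (Z : Set V) : ℝ :=
  ((Nat.card {p : V × V // p.1 ∈ Z ∧ p.2 ∈ Z ∧ (A p.1 p.2 ∨ A p.2 p.1)} : ℝ) / 2) /
    (Nat.choose (Nat.card Z) 2 : ℝ)

/-- `d = 1 − (E_{x ∈ X} ρ⁻_Y(x))/(1−α)`. -/
noncomputable def dXY {V : Type*} [Fintype V] (A : V → V → Prop) : ℝ :=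
  1 - ((∑ᶠ x ∈ bigX A, rhoMIn A (bigY A) x) / (Nat.card (bigX A) : ℝ)) / (1 - alphaX A)

/-- `OPT(k,l)`. -/
noncomputable def OPT (k l : ℕ) : ℝ :=
  if k = l then
    (1 / 2 ^ (2 * k)) *
      sSup {y : ℝ | ∃ a ∈ Set.Icc (0 : ℝ) 1, y = a * (1 - a) ^ (2 * k) + (1 - a) * a ^ (2 * k)}
  else
    sSup {y : ℝ | ∃ a ∈ Set.Icc (0 : ℝ) (1 / 2),
      ∃ d ∈ Set.Icc (0 : ℝ) ((k : ℝ) / ((k : ℝ) + (l : ℝ))),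
      y = a * (1 - a) ^ (k + l) * d ^ k * (1 - d) ^ l
        + (((k : ℝ) - 1) ^ (k - 1) * (l : ℝ) ^ l / ((k : ℝ) + (l : ℝ) - 1) ^ (k + l - 1))
          * (1 - a) * a ^ (k + l) * (1 - d)}


lemma aux_amgm (p q s : ℝ) (hp : 0 ≤ p) (hq : 0 ≤ q) (hs : p + q ≤ s) (a b : ℕ) :
    p ^ a * q ^ b * ((a : ℝ) + b) ^ (a + b) ≤ (a : ℝ) ^ a * (b : ℝ) ^ b * s ^ (a + b) := by
  rcases Nat.eq_zero_or_pos a with rfl | ha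
  · have h : q ^ b ≤ s ^ b := pow_le_pow_left₀ hq (by linarith) b
    simp only [Nat.cast_zero, zero_add, pow_zero, one_mul]
    rw [mul_comm]
    exact mul_le_mul_of_nonneg_left h (by positivity)
  rcases Nat.eq_zero_or_pos b with rfl | hb
  · have h : p ^ a ≤ s ^ a := pow_le_pow_left₀ hp (by linarith) a
    simp only [Nat.cast_zero, add_zero, pow_zero, mul_one]
    rw [mul_comm]
    exact mul_le_mul_of_nonneg_left h (by positivity)
  have ha' : (0 : ℝ) < a := by exact_mod_cast ha
  have hb' : (0 : ℝ) < b := by exact_mod_cast hb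
  have hab : (0 : ℝ) < (a : ℝ) + b := by positivity
  have h := Real.geom_mean_le_arith_mean2_weighted (w₁ := a / ((a : ℝ) + b))
    (w₂ := b / ((a : ℝ) + b)) (p₁ := p / a) (p₂ := q / b) (by positivity) (by positivity)
    (by positivity) (by positivity) (by field_simp)
  have e : (a : ℝ) / (a + b) * (p / a) + b / (a + b) * (q / b) = (p + q) / (a + b) := by
    field_simp
  rw [e] at h
  have h2 := pow_le_pow_left₀ (by positivity) h (a + b)
  rw [mul_pow, ← Real.rpow_mul_natCast (by positivity), ← Real.rpow_mul_natCast (by positivity)]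
    at h2
  have e1 : (a : ℝ) / (a + b) * ((a + b : ℕ) : ℝ) = (a : ℝ) := by push_cast; field_simp
  have e2 : (b : ℝ) / (a + b) * ((a + b : ℕ) : ℝ) = (b : ℝ) := by push_cast; field_simp
  rw [e1, e2, Real.rpow_natCast, Real.rpow_natCast, div_pow, div_pow, div_pow,
    div_mul_div_comm, div_le_div_iff₀ (by positivity) (by positivity)] at h2
  refine h2.trans ?_
  rw [mul_comm]
  exact mul_le_mul_of_nonneg_left (pow_le_pow_left₀ (by positivity) hs _) (by positivity)

lemma aux_step (j : ℕ) : (((j : ℝ) + 1) / (j + 2)) ^ (j + 1) ≤ ((j : ℝ) / (j + 1)) ^ j := by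
  have hb := one_add_mul_le_pow (a := -1 / ((j : ℝ) + 1) ^ 2) (by
    rw [le_div_iff₀ (by positivity)]; nlinarith [(Nat.cast_nonneg j : (0 : ℝ) ≤ j)]) j
  have hj : (0 : ℝ) ≤ j := Nat.cast_nonneg j
  have e : (j : ℝ) / (j + 1) = (1 + -1 / ((j : ℝ) + 1) ^ 2) * (((j : ℝ) + 1) / (j + 2)) := by
    field_simp; ring
  rw [e, mul_pow, pow_succ, mul_comm]
  refine mul_le_mul_of_nonneg_right (le_trans ?_ hb) (by positivity)
  have e3 : 1 + (j : ℝ) * (-1 / ((j : ℝ) + 1) ^ 2) = (j ^ 2 + j + 1) / ((j : ℝ) + 1) ^ 2 := by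
    field_simp; ring
  rw [e3, div_le_div_iff₀ (by positivity) (by positivity)]
  nlinarith

lemma aux_anti : Antitone (fun j : ℕ => ((j : ℝ) / (j + 1)) ^ j) := by
  refine antitone_nat_of_succ_le fun j => ?_
  have := aux_step j
  have e : ((j : ℝ) + 1 + 1) = j + 2 := by ring
  simpa [e] using this

lemma aux_coef (k l : ℕ) (hlk : l ≤ k) :
    ((k : ℝ) + 1) * (k : ℝ) ^ k * ((l : ℝ) + 1) ^ (l + 1)
      ≤ ((k : ℝ) + 1) ^ (k + 1) * ((l : ℝ) + 1) * (l : ℝ) ^ l := by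
  have h := aux_anti hlk
  simp only [div_pow] at h
  rw [div_le_div_iff₀ (by positivity) (by positivity)] at h
  have h2 := mul_le_mul_of_nonneg_left h (show (0 : ℝ) ≤ ((k : ℝ) + 1) * (l + 1) by positivity)
  rw [pow_succ, pow_succ]
  nlinarith [h2]

lemma aux_Dmin {V : Type} [Fintype V] (A : V → V → Prop) {x : V} (hx : x ∈ bigX A) :
    Dmin A ≤ rho A x := by
  refine csInf_le ?_ ⟨x, hx, rfl⟩
  refine ⟨0, ?_⟩
  rintro _ ⟨y, _, rfl⟩
  unfold rho
  positivity

open Classical in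
/-- non-neighbours of `x` that are out-neighbours of `v` -/
noncomputable def outNon {V : Type} [Fintype V] (A : V → V → Prop) (v x : V) : Finset V :=
  Finset.univ.filter fun u => A v u ∧ ¬ (A x u ∨ A u x)

open Classical in
/-- non-neighbours of `x` that are in-neighbours of `v` -/
noncomputable def inNon {V : Type} [Fintype V] (A : V → V → Prop) (v x : V) : Finset V :=
  Finset.univ.filter fun u => A u v ∧ ¬ (A x u ∨ A u x)

open Classical in
lemma aux_sum {V : Type} [Fintype V] (A : V → V → Prop)
    (hopp : ∀ u v, A u v → ¬ A v u) (hn : 1 ≤ Fintype.card V) (v x : V) (hx : x ∈ bigX A) :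
    ((outNon A v x).card : ℝ) + (inNon A v x).card ≤ (1 - Dmin A) * Fintype.card V := by
  have h1 : Disjoint (outNon A v x) (inNon A v x) := by
    rw [Finset.disjoint_left]
    intro u hu hu'
    simp only [outNon, inNon, Finset.mem_filter] at hu hu'
    exact hopp _ _ hu.2.1 hu'.2.1
  have h2 : Disjoint (outNon A v x ∪ inNon A v x)
      (Finset.univ.filter fun u => A x u ∨ A u x) := by
    rw [Finset.disjoint_left]
    intro u hu hu'
    simp only [outNon, inNon, Finset.mem_union, Finset.mem_filter] at hu hu'
    tauto
  have h3 := Finset.card_le_univ ((outNon A v x ∪ inNon A v x) ∪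
    (Finset.univ.filter fun u => A x u ∨ A u x))
  rw [Finset.card_union_of_disjoint h2, Finset.card_union_of_disjoint h1] at h3
  have h4 := aux_Dmin A hx
  have hn' : (0 : ℝ) < Fintype.card V := by exact_mod_cast hn
  unfold rho at h4
  rw [le_div_iff₀ hn', Nat.card_eq_fintype_card, Fintype.card_subtype] at h4
  have h5 : ((outNon A v x).card : ℝ) + (inNon A v x).card +
    (Finset.univ.filter fun u => A x u ∨ A u x).card ≤ Fintype.card V := by exact_mod_cast h3
  linarith

/-- box of candidate maps -/
def box {V : Type} (k l : ℕ) (v : V) (f : Fin k → Finset V) (g : Fin l → Finset V) :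
    Fin (k + l + 1) → Finset V :=
  Fin.cons (α := fun _ => Finset V) {v} (Fin.append f g)

lemma card_box {V : Type} (k l : ℕ) (v : V) (f : Fin k → Finset V) (g : Fin l → Finset V) :
    (Fintype.piFinset (box k l v f g)).card = (∏ i, (f i).card) * ∏ j, (g j).card := by
  rw [Fintype.card_piFinset, Fin.prod_univ_succ, Fin.prod_univ_add]
  simp [box]

lemma prod_one_ite {V : Type} (k : ℕ) (i : Fin k) (x : V) (P : Finset V) :
    (∏ j, (if j = i then ({x} : Finset V) else P).card) = P.card ^ (k - 1) := by
  rw [← Finset.mul_prod_erase _ _ (Finset.mem_univ i)]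
  rw [Finset.prod_congr rfl (g := fun _ => P.card)]
  · simp
  · intro j hj
    simp [Finset.ne_of_mem_erase hj]

open Classical in
lemma aux_count (k l : ℕ) {V : Type} [Fintype V] (A : V → V → Prop) (v : V) :
    Nat.card {φ : Fin (k + l + 1) → V // IsStarEmb k l A φ ∧ φ 0 = v ∧
        ∃ a : Fin (k + l + 1), a ≠ 0 ∧ φ a ∈ bigX A} ≤
      k * ∑ x ∈ Finset.univ.filter (fun u => A v u ∧ u ∈ bigX A),
        (outNon A v x).card ^ (k - 1) * (inNon A v x).card ^ l +
      l * ∑ x ∈ Finset.univ.filter (fun u => A u v ∧ u ∈ bigX A),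
        (outNon A v x).card ^ k * (inNon A v x).card ^ (l - 1) := by
  set T : Finset (Fin (k + l + 1) → V) :=
    (Finset.univ.biUnion fun i : Fin k =>
      (Finset.univ.filter (fun u => A v u ∧ u ∈ bigX A)).biUnion fun x =>
        Fintype.piFinset (box k l v (fun j => if j = i then {x} else outNon A v x)
          (fun _ => inNon A v x))) ∪
    (Finset.univ.biUnion fun i : Fin l =>
      (Finset.univ.filter (fun u => A u v ∧ u ∈ bigX A)).biUnion fun x =>
        Fintype.piFinset (box k l v (fun _ => outNon A v x)
          (fun j => if j = i then {x} else inNon A v x))) with hT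
  rw [Nat.card_eq_fintype_card, Fintype.card_subtype]
  have hsub : (Finset.univ.filter fun φ : Fin (k + l + 1) → V => IsStarEmb k l A φ ∧ φ 0 = v ∧
        ∃ a : Fin (k + l + 1), a ≠ 0 ∧ φ a ∈ bigX A) ⊆ T := by
    intro φ hφ
    rw [Finset.mem_filter] at hφ
    obtain ⟨-, ⟨hinj, harc⟩, h0, a, ha0, haX⟩ := hφ
    have hout : ∀ i : Fin k, A v (φ (Fin.succ (Fin.castAdd l i))) := by
      intro i
      rw [← h0, ← harc]
      left
      simp
    have hin : ∀ j : Fin l, A (φ (Fin.succ (Fin.natAdd k j))) v := by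
      intro j
      rw [← h0, ← harc]
      right
      simp
    have hnon : ∀ b c : Fin (k + l), ¬ A (φ b.succ) (φ c.succ) := by
      intro b c
      rw [← harc]
      simp [StarArc]
    have ho : ∀ (b : Fin (k + l)) (i : Fin k),
        φ (Fin.succ (Fin.castAdd l i)) ∈ outNon A v (φ b.succ) := by
      intro b i
      simp only [outNon, Finset.mem_filter, Finset.mem_univ, true_and]
      exact ⟨hout i, not_or.2 ⟨hnon _ _, hnon _ _⟩⟩
    have hi : ∀ (b : Fin (k + l)) (i : Fin l),
        φ (Fin.succ (Fin.natAdd k i)) ∈ inNon A v (φ b.succ) := by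
      intro b i
      simp only [inNon, Finset.mem_filter, Finset.mem_univ, true_and]
      exact ⟨hin i, not_or.2 ⟨hnon _ _, hnon _ _⟩⟩
    obtain ⟨b, rfl⟩ := Fin.exists_succ_eq.2 ha0
    rw [hT, Finset.mem_union]
    revert haX
    refine Fin.addCases (fun i => ?_) (fun j => ?_) b
    · intro haX
      left
      simp only [Finset.mem_biUnion, Finset.mem_univ, true_and, Finset.mem_filter]
      refine ⟨i, _, ⟨hout i, haX⟩, ?_⟩
      rw [Fintype.mem_piFinset]
      intro c
      refine Fin.cases ?_ (fun c => ?_) c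
      · simp [box, h0]
      · refine Fin.addCases (fun i' => ?_) (fun j' => ?_) c
        · simp only [box, Fin.cons_succ, Fin.append_left]
          split_ifs with h
          · simp [h]
          · exact ho _ _
        · simp only [box, Fin.cons_succ, Fin.append_right]
          exact hi _ _
    · intro haX
      right
      simp only [Finset.mem_biUnion, Finset.mem_univ, true_and, Finset.mem_filter]
      refine ⟨j, _, ⟨hin j, haX⟩, ?_⟩
      rw [Fintype.mem_piFinset]
      intro c
      refine Fin.cases ?_ (fun c => ?_) c
      · simp [box, h0]
      · refine Fin.addCases (fun i' => ?_) (fun j' => ?_) c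
        · simp only [box, Fin.cons_succ, Fin.append_left]
          exact ho _ _
        · simp only [box, Fin.cons_succ, Fin.append_right]
          split_ifs with h
          · simp [h]
          · exact hi _ _
  refine (Finset.card_le_card hsub).trans ((Finset.card_union_le _ _).trans ?_)
  refine add_le_add ?_ ?_
  · refine Finset.card_biUnion_le.trans ?_
    refine (Finset.sum_le_card_nsmul _ _ _ fun i _ => ?_).trans_eq (by
      rw [Finset.card_univ, Fintype.card_fin, smul_eq_mul])
    refine Finset.card_biUnion_le.trans (Finset.sum_le_sum fun x _ => ?_)
    rw [card_box, prod_one_ite]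
    simp
  · refine Finset.card_biUnion_le.trans ?_
    refine (Finset.sum_le_card_nsmul _ _ _ fun i _ => ?_).trans_eq (by
      rw [Finset.card_univ, Fintype.card_fin, smul_eq_mul])
    refine Finset.card_biUnion_le.trans (Finset.sum_le_sum fun x _ => ?_)
    rw [card_box, prod_one_ite]
    simp

theorem stmt9 (k l : ℕ) (hl : 1 ≤ l) (hlk : l ≤ k) (hm : 6 ≤ k + l)
    (V : Type) [Fintype V] (A : V → V → Prop)
    (hirr : Irreflexive A) (hopp : ∀ u v, A u v → ¬ A v u) (hn : 1 ≤ Fintype.card V)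
    (hX : (bigX A).Nonempty) (v : V) :
    sCondOn k l A v (fun φ => ∃ a : Fin (k + l + 1), a ≠ 0 ∧ φ a ∈ bigX A)
      ≤ lam1 k l * rhoIn A (bigX A) v * (1 - Dmin A) ^ (k + l - 1) := by
  classical
  have hc : (Nat.card {φ : Fin (k + l + 1) → V // IsStarEmb k l A φ ∧ φ 0 = v ∧
        ∃ a : Fin (k + l + 1), a ≠ 0 ∧ φ a ∈ bigX A} : ℝ) ≤ _ :=
    Nat.cast_le.2 (aux_count k l A v)
  obtain ⟨K, rfl⟩ : ∃ K, k = K + 1 := ⟨k - 1, by omega⟩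
  obtain ⟨L, rfl⟩ : ∃ L, l = L + 1 := ⟨l - 1, by omega⟩
  have hn' : (0 : ℝ) < Fintype.card V := by exact_mod_cast hn
  set n : ℝ := (Fintype.card V : ℝ) with hndef
  set s : ℝ := (1 - Dmin A) * n with hs
  set P := Finset.univ.filter (fun u => A v u ∧ u ∈ bigX A) with hP
  set Q := Finset.univ.filter (fun u => A u v ∧ u ∈ bigX A) with hQ
  have hs0 : 0 ≤ s := by
    obtain ⟨x, hx⟩ := hX
    exact le_trans (by positivity) (aux_sum A hopp hn v x hx)
  have hM : (0 : ℝ) < (K : ℝ) + L + 1 := by positivity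
  have hlam : lam1 (K + 1) (L + 1) =
      ((K : ℝ) + 1) ^ (K + 1) * ((L : ℝ) + 1) * (L : ℝ) ^ L / ((K : ℝ) + L + 1) ^ (K + L + 1) := by
    unfold lam1
    rw [show K + 1 + (L + 1) - 1 = K + L + 1 by omega, Nat.add_sub_cancel]
    push_cast
    congr 2 <;> ring
  set lam := lam1 (K + 1) (L + 1) with hlamdef
  have b1 : ∀ x ∈ P, ((K : ℝ) + 1) * (((outNon A v x).card : ℝ) ^ K *
      ((inNon A v x).card : ℝ) ^ (L + 1)) ≤ lam * s ^ (K + L + 1) := by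
    intro x hx
    have hx' := (Finset.mem_filter.1 hx).2.2
    have h := aux_amgm _ _ s (Nat.cast_nonneg _) (Nat.cast_nonneg _)
      (aux_sum A hopp hn v x hx') K (L + 1)
    have hco := aux_coef K L (by omega)
    rw [hlam, div_mul_eq_mul_div, le_div_iff₀ (by positivity)]
    push_cast at h
    rw [← add_assoc (K : ℝ), ← add_assoc K] at h
    calc _ = ((K : ℝ) + 1) * (((outNon A v x).card : ℝ) ^ K *
      ((inNon A v x).card : ℝ) ^ (L + 1) * ((K : ℝ) + L + 1) ^ (K + L + 1)) := by ring
      _ ≤ ((K : ℝ) + 1) * _ := mul_le_mul_of_nonneg_left h (by positivity)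
      _ = (((K : ℝ) + 1) * (K : ℝ) ^ K * ((L : ℝ) + 1) ^ (L + 1)) * s ^ (K + L + 1) := by ring
      _ ≤ _ := mul_le_mul_of_nonneg_right hco (by positivity)
  have b2 : ∀ x ∈ Q, ((L : ℝ) + 1) * (((outNon A v x).card : ℝ) ^ (K + 1) *
      ((inNon A v x).card : ℝ) ^ L) ≤ lam * s ^ (K + L + 1) := by
    intro x hx
    have hx' := (Finset.mem_filter.1 hx).2.2
    have h := aux_amgm _ _ s (Nat.cast_nonneg _) (Nat.cast_nonneg _)
      (aux_sum A hopp hn v x hx') (K + 1) L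
    rw [hlam, div_mul_eq_mul_div, le_div_iff₀ (by positivity)]
    push_cast at h
    rw [add_right_comm (K : ℝ), add_right_comm K] at h
    calc _ = ((L : ℝ) + 1) * (((outNon A v x).card : ℝ) ^ (K + 1) *
      ((inNon A v x).card : ℝ) ^ L * ((K : ℝ) + L + 1) ^ (K + L + 1)) := by ring
      _ ≤ ((L : ℝ) + 1) * _ := mul_le_mul_of_nonneg_left h (by positivity)
      _ = _ := by ring
  have hPQ : Nat.card {u : V // (A v u ∨ A u v) ∧ u ∈ bigX A} = P.card + Q.card := by
    rw [Nat.card_eq_fintype_card, Fintype.card_subtype, ← Finset.card_union_of_disjoint]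
    · congr 1
      ext u
      simp only [hP, hQ, Finset.mem_union, Finset.mem_filter, Finset.mem_univ, true_and]
      tauto
    · rw [Finset.disjoint_left]
      intro u hu hu'
      exact hopp _ _ (Finset.mem_filter.1 hu).2.1 (Finset.mem_filter.1 hu').2.1
  have hc2 : (Nat.card {φ : Fin (K + 1 + (L + 1) + 1) → V // IsStarEmb (K + 1) (L + 1) A φ ∧
      φ 0 = v ∧ ∃ a : Fin (K + 1 + (L + 1) + 1), a ≠ 0 ∧ φ a ∈ bigX A} : ℝ) ≤
      ((P.card : ℝ) + Q.card) * (lam * s ^ (K + L + 1)) := by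
    refine hc.trans ?_
    push_cast
    rw [Finset.mul_sum, Finset.mul_sum, add_mul]
    refine add_le_add ?_ ?_
    · simpa using Finset.sum_le_card_nsmul P _ _ b1
    · simpa using Finset.sum_le_card_nsmul Q _ _ b2
  unfold sCondOn rhoIn
  rw [hPQ, div_le_iff₀ (by positivity)]
  refine hc2.trans_eq ?_
  rw [hs, ← hndef, show K + 1 + (L + 1) - 1 = K + L + 1 by omega,
    show K + 1 + (L + 1) = K + L + 1 + 1 by omega, mul_pow, pow_succ n (K + L + 1)]
  push_cast
  field_simp
end

section
/- Suppose X ≠ ∅ and Y ≠ ∅. Then at least one of the following two inequalities holds: (i) λ₁ α ((1−α−β)^{m−1} + (1−D)^{m−1}) + (λ₀+λ₁) β^m ≥ S; or (ii) (λ₀+λ₁) β^m + (m(m−1)/C(m,k)) · α(α+β)(1−D)^{m−2} ≥ S. -/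
open scoped BigOperators

/-! ### Real inequalities -/

lemma amgm_aux (a b : ℝ) (ha : 0 ≤ a) (hb : 0 ≤ b) (p q : ℕ) :
    a ^ p * b ^ q * ((p : ℝ) + q) ^ (p + q) ≤ (p : ℝ) ^ p * (q : ℝ) ^ q * (a + b) ^ (p + q) := by
  rcases Nat.eq_zero_or_pos p with rfl | hp
  · simp only [pow_zero, one_mul, Nat.cast_zero, zero_add]
    rw [mul_comm]
    gcongr
    linarith
  rcases Nat.eq_zero_or_pos q with rfl | hq
  · simp only [pow_zero, mul_one, Nat.cast_zero, add_zero]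
    rw [mul_comm]
    gcongr
    linarith
  have hp' : (0 : ℝ) < p := by exact_mod_cast hp
  have hq' : (0 : ℝ) < q := by exact_mod_cast hq
  have hs : (0 : ℝ) < (p : ℝ) + q := by linarith
  have key := Real.geom_mean_le_arith_mean2_weighted (w₁ := p / ((p : ℝ) + q))
    (w₂ := q / ((p : ℝ) + q)) (p₁ := a / p) (p₂ := b / q) (by positivity) (by positivity)
    (by positivity) (by positivity) (by field_simp)
  have e1 : (p : ℝ) / (p + q) * (a / p) + q / (p + q) * (b / q) = (a + b) / (p + q) := by
    field_simp
  rw [e1] at key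
  have key2 := pow_le_pow_left₀ (by positivity) key (p + q)
  have e2 : ((a / p) ^ ((p : ℝ) / (p + q)) * (b / q) ^ ((q : ℝ) / (p + q))) ^ (p + q)
      = (a / p) ^ p * (b / q) ^ q := by
    rw [mul_pow, ← Real.rpow_natCast, ← Real.rpow_natCast, ← Real.rpow_mul (by positivity),
      ← Real.rpow_mul (by positivity)]
    push_cast
    rw [div_mul_cancel₀ _ hs.ne', div_mul_cancel₀ _ hs.ne', Real.rpow_natCast, Real.rpow_natCast]
  rw [e2, div_pow, div_pow, div_pow, div_mul_div_comm, div_le_div_iff₀ (by positivity)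
    (by positivity)] at key2
  linarith

lemma lam0_bound (k l : ℕ) (hl : 1 ≤ l) (a b e : ℝ) (ha : 0 ≤ a) (hb : 0 ≤ b)
    (he : a + b ≤ e) : a ^ k * b ^ l ≤ lam0 k l * e ^ (k + l) := by
  have h := amgm_aux a b ha hb k l
  have hl' : (1 : ℝ) ≤ l := by exact_mod_cast hl
  have hk' : (0 : ℝ) ≤ k := by positivity
  have hs : (0 : ℝ) < ((k : ℝ) + l) ^ (k + l) := by positivity
  unfold lam0
  rw [div_mul_eq_mul_div, le_div_iff₀ hs]
  refine h.trans ?_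
  gcongr

lemma lam1_in (k l : ℕ) (hl : 1 ≤ l) (hlk : l ≤ k) (a b e : ℝ) (ha : 0 ≤ a)
    (hb : 0 ≤ b) (he : a + b ≤ e) :
    (l : ℝ) * (a ^ k * b ^ (l - 1)) ≤ lam1 k l * e ^ (k + l - 1) := by
  obtain ⟨j, rfl⟩ := Nat.exists_eq_add_of_le hl
  have h := amgm_aux a b ha hb k j
  have hk' : (1 : ℝ) ≤ k := by exact_mod_cast (hl.trans hlk)
  have hs : (0 : ℝ) < ((k : ℝ) + j) ^ (k + j) := by positivity
  unfold lam1
  have e1 : k + (1 + j) - 1 = k + j := by omega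
  have e2 : 1 + j - 1 = j := by omega
  rw [e1, e2]
  have e3 : ((k : ℝ) + ((1 + j : ℕ) : ℝ) - 1) = k + j := by push_cast; ring
  have e4 : (((1 + j : ℕ) : ℝ) - 1) = j := by push_cast; ring
  rw [e3, e4, div_mul_eq_mul_div, le_div_iff₀ hs]
  calc ((1 + j : ℕ) : ℝ) * (a ^ k * b ^ j) * ((k : ℝ) + j) ^ (k + j)
      = ((1 + j : ℕ) : ℝ) * (a ^ k * b ^ j * ((k : ℝ) + j) ^ (k + j)) := by ring
    _ ≤ ((1 + j : ℕ) : ℝ) * ((k : ℝ) ^ k * (j : ℝ) ^ j * (a + b) ^ (k + j)) := by gcongr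
    _ ≤ ((1 + j : ℕ) : ℝ) * ((k : ℝ) ^ k * (j : ℝ) ^ j * e ^ (k + j)) := by gcongr
    _ = _ := by ring

lemma mono_aux (i j : ℕ) (h : j ≤ i) :
    (i : ℝ) ^ i * ((j : ℝ) + 1) ^ j ≤ ((i : ℝ) + 1) ^ i * (j : ℝ) ^ j := by
  obtain ⟨t, rfl⟩ := Nat.exists_eq_add_of_le h
  have h := amgm_aux ((j : ℝ) + 1) t (by positivity) (by positivity) j t
  have ht : (0 : ℝ) < (t : ℝ) ^ t := by
    rcases Nat.eq_zero_or_pos t with rfl | h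
    · simp
    · positivity
  refine le_of_mul_le_mul_right ?_ ht
  push_cast
  calc ((j : ℝ) + t) ^ (j + t) * ((j : ℝ) + 1) ^ j * (t : ℝ) ^ t
      = ((j : ℝ) + 1) ^ j * (t : ℝ) ^ t * ((j : ℝ) + t) ^ (j + t) := by ring
    _ ≤ _ := h
    _ = _ := by
      rw [show (j : ℝ) + 1 + t = j + t + 1 by ring]; ring

lemma lam1_out (k l : ℕ) (hl : 1 ≤ l) (hlk : l ≤ k) (a b e : ℝ) (ha : 0 ≤ a)
    (hb : 0 ≤ b) (he : a + b ≤ e) :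
    (k : ℝ) * (a ^ (k - 1) * b ^ l) ≤ lam1 k l * e ^ (k + l - 1) := by
  obtain ⟨j, rfl⟩ := Nat.exists_eq_add_of_le hl
  obtain ⟨i, rfl⟩ := Nat.exists_eq_add_of_le (hl.trans hlk)
  have hji : j ≤ i := by omega
  have h := amgm_aux a b ha hb i (1 + j)
  have hm := mono_aux i j hji
  have e1 : 1 + i + (1 + j) - 1 = i + (1 + j) := by omega
  have e2 : 1 + j - 1 = j := by omega
  have e2' : 1 + i - 1 = i := by omega
  unfold lam1
  rw [e1, e2, e2']
  have hs : (0 : ℝ) < ((i : ℝ) + ((1 + j : ℕ) : ℝ)) ^ (i + (1 + j)) := by positivity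
  have e3 : (((1 + i : ℕ) : ℝ) + ((1 + j : ℕ) : ℝ) - 1) = (i : ℝ) + ((1 + j : ℕ) : ℝ) := by
    push_cast; ring
  have e4 : (((1 + j : ℕ) : ℝ) - 1) = j := by push_cast; ring
  rw [e3, e4, div_mul_eq_mul_div, le_div_iff₀ hs]
  have he0 : 0 ≤ e := by linarith
  calc ((1 + i : ℕ) : ℝ) * (a ^ i * b ^ (1 + j)) * ((i : ℝ) + ((1 + j : ℕ) : ℝ)) ^ (i + (1 + j))
      = ((1 + i : ℕ) : ℝ) * (a ^ i * b ^ (1 + j) * ((i : ℝ) + ((1 + j : ℕ) : ℝ)) ^ (i + (1 + j)))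
        := by ring
    _ ≤ ((1 + i : ℕ) : ℝ) * ((i : ℝ) ^ i * ((1 + j : ℕ) : ℝ) ^ (1 + j) * (a + b) ^ (i + (1 + j)))
        := by gcongr
    _ ≤ ((1 + i : ℕ) : ℝ) * ((i : ℝ) ^ i * ((1 + j : ℕ) : ℝ) ^ (1 + j) * e ^ (i + (1 + j)))
        := by gcongr
    _ = (((i : ℝ) + 1) * ((j : ℝ) + 1) * e ^ (i + (1 + j))) * ((i : ℝ) ^ i * ((j : ℝ) + 1) ^ j)
        := by
          push_cast; rw [pow_add ((1 : ℝ) + j), add_comm (1 : ℝ) (j : ℝ)]; ring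
    _ ≤ (((i : ℝ) + 1) * ((j : ℝ) + 1) * e ^ (i + (1 + j))) * (((i : ℝ) + 1) ^ i * (j : ℝ) ^ j)
        := by gcongr
    _ = _ := by
          push_cast; rw [pow_add ((1 : ℝ) + i) 1 i, add_comm (1 : ℝ) (i : ℝ)]; ring

lemma binom_bound (p q : ℕ) (a b e : ℝ) (ha : 0 ≤ a) (hb : 0 ≤ b) (he : a + b ≤ e) :
    ((p + q).choose p : ℝ) * (a ^ p * b ^ q) ≤ e ^ (p + q) := by
  have h : (a + b) ^ (p + q) ≤ e ^ (p + q) := by gcongr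
  refine le_trans ?_ h
  rw [add_pow]
  have := Finset.single_le_sum (f := fun i => a ^ i * b ^ (p + q - i) * ((p + q).choose i : ℝ))
    (s := Finset.range (p + q + 1)) (fun i _ => by positivity)
    (Finset.mem_range.2 (show p < p + q + 1 by omega))
  refine le_trans (le_of_eq ?_) this
  simp only [Nat.add_sub_cancel_left]
  ring

/-- The coefficient in (ii). -/
noncomputable def Mco (k l : ℕ) : ℝ :=
  ((k : ℝ) + l) * ((k : ℝ) + l - 1) / (Nat.choose (k + l) k : ℝ)

lemma M_oo (k l : ℕ) (hk : 2 ≤ k) (a b e : ℝ) (ha : 0 ≤ a) (hb : 0 ≤ b) (he : a + b ≤ e) :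
    (k : ℝ) * (((k - 1 : ℕ) : ℝ) * (a ^ (k - 2) * b ^ l)) ≤ Mco k l * e ^ (k + l - 2) := by
  obtain ⟨p, rfl⟩ := Nat.exists_eq_add_of_le' hk
  have h := binom_bound p l a b e ha hb he
  have hc : (0 : ℝ) < (Nat.choose (p + 2 + l) (p + 2) : ℝ) := by
    exact_mod_cast Nat.choose_pos (by omega)
  have h1 := Nat.add_one_mul_choose_eq (p + l + 1) (p + 1)
  have h2 := Nat.add_one_mul_choose_eq (p + l) p
  have h1' : ((p : ℝ) + l + 1 + 1) * ((p + l + 1).choose (p + 1)) =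
    (Nat.choose (p + 2 + l) (p + 2)) * ((p : ℝ) + 1 + 1) := by
    rw [show p + 2 + l = p + l + 1 + 1 by ring]; exact_mod_cast h1
  have h2' : ((p : ℝ) + l + 1) * ((p + l).choose p) =
    ((p + l + 1).choose (p + 1)) * ((p : ℝ) + 1) := by exact_mod_cast h2
  unfold Mco
  rw [div_mul_eq_mul_div, le_div_iff₀ hc, show p + 2 + l - 2 = p + l by omega,
    show p + 2 - 1 = p + 1 by omega, show p + 2 - 2 = p by omega]
  push_cast
  calc _ = ((p + 2 + l).choose (p + 2) * ((p : ℝ) + 1 + 1)) * (((p : ℝ) + 1) * (a ^ p * b ^ l)) := by ring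
    _ = ((p : ℝ) + l + 1 + 1) * (((p + l + 1).choose (p + 1)) * ((p : ℝ) + 1)) * (a ^ p * b ^ l) := by
      rw [← h1']; ring
    _ = ((p : ℝ) + l + 1 + 1) * ((p : ℝ) + l + 1) * (((p + l).choose p) * (a ^ p * b ^ l)) := by
      rw [← h2']; ring
    _ ≤ ((p : ℝ) + l + 1 + 1) * ((p : ℝ) + l + 1) * e ^ (p + l) := by gcongr
    _ = _ := by ring

lemma Mco_comm (k l : ℕ) : Mco k l = Mco l k := by
  unfold Mco
  rw [Nat.choose_symm_add, add_comm (k : ℝ), add_comm k l]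

lemma Mco_nonneg (k l : ℕ) (hl : 1 ≤ l) : 0 ≤ Mco k l := by
  unfold Mco
  have : (1 : ℝ) ≤ l := by exact_mod_cast hl
  have : (0 : ℝ) ≤ k := by positivity
  apply div_nonneg _ (by positivity)
  apply mul_nonneg <;> linarith

lemma M_ii (k l : ℕ) (hl : 1 ≤ l) (a b e : ℝ) (ha : 0 ≤ a) (hb : 0 ≤ b) (he : a + b ≤ e) :
    (l : ℝ) * (((l - 1 : ℕ) : ℝ) * (a ^ k * b ^ (l - 2))) ≤ Mco k l * e ^ (k + l - 2) := by
  rcases Nat.lt_or_ge l 2 with h | h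
  · obtain rfl : l = 1 := by omega
    simp only [Nat.sub_self, Nat.cast_zero, zero_mul, mul_zero]
    have := Mco_nonneg k 1 le_rfl
    have : 0 ≤ e := by linarith
    positivity
  · have := M_oo l k h b a e hb ha (by linarith)
    rw [Mco_comm, add_comm k l, mul_comm (a ^ k)]
    exact this

lemma M_oi (k l : ℕ) (hl : 1 ≤ l) (hk : 1 ≤ k) (a b e : ℝ) (ha : 0 ≤ a) (hb : 0 ≤ b)
    (he : a + b ≤ e) :
    (k : ℝ) * ((l : ℝ) * (a ^ (k - 1) * b ^ (l - 1))) ≤ Mco k l * e ^ (k + l - 2) := by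
  obtain ⟨p, rfl⟩ := Nat.exists_eq_add_of_le' hk
  obtain ⟨q, rfl⟩ := Nat.exists_eq_add_of_le' hl
  have h := binom_bound p q a b e ha hb he
  have hc : (0 : ℝ) < (Nat.choose (p + 1 + (q + 1)) (p + 1) : ℝ) := by
    exact_mod_cast Nat.choose_pos (by omega)
  have h1 := Nat.add_one_mul_choose_eq (p + q + 1) p
  have h2 := Nat.add_one_mul_choose_eq (p + q) q
  have h1' : ((p : ℝ) + q + 1 + 1) * ((p + q + 1).choose p) =
    (Nat.choose (p + 1 + (q + 1)) (p + 1)) * ((p : ℝ) + 1) := by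
    rw [show p + 1 + (q + 1) = p + q + 1 + 1 by ring]; exact_mod_cast h1
  have h2' : ((p : ℝ) + q + 1) * ((p + q).choose p) =
    ((p + q + 1).choose p) * ((q : ℝ) + 1) := by
    rw [show (p + q + 1).choose p = (p + q + 1).choose (q + 1) by
      rw [← Nat.choose_symm_of_eq_add]; omega, Nat.choose_symm_add]
    exact_mod_cast h2
  unfold Mco
  rw [div_mul_eq_mul_div, le_div_iff₀ hc, show p + 1 + (q + 1) - 2 = p + q by omega,
    show p + 1 - 1 = p by omega, show q + 1 - 1 = q by omega]
  push_cast
  calc _ = ((p + 1 + (q + 1)).choose (p + 1) * ((p : ℝ) + 1)) * (((q : ℝ) + 1) * (a ^ p * b ^ q)) := by ring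
    _ = ((p : ℝ) + q + 1 + 1) * (((p + q + 1).choose p) * ((q : ℝ) + 1)) * (a ^ p * b ^ q) := by
      rw [← h1']; ring
    _ = ((p : ℝ) + q + 1 + 1) * ((p : ℝ) + q + 1) * (((p + q).choose p) * (a ^ p * b ^ q)) := by
      rw [← h2']; ring
    _ ≤ ((p : ℝ) + q + 1 + 1) * ((p : ℝ) + q + 1) * e ^ (p + q) := by gcongr
    _ = _ := by ring

lemma lam1_nonneg (k l : ℕ) (hl : 1 ≤ l) : 0 ≤ lam1 k l := by
  unfold lam1
  have : (0 : ℝ) ≤ (l : ℝ) - 1 := by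
    have : (1 : ℝ) ≤ l := by exact_mod_cast hl
    linarith
  have : (0 : ℝ) ≤ (k : ℝ) + l - 1 := by
    have : (0 : ℝ) ≤ k := by positivity
    linarith
  positivity

/-! ### Counting -/

open Classical in
lemma count_core {V : Type} [Fintype V] (k l : ℕ) (Z : Finset (Fin (k + l + 1)))
    (g : Fin (k + l + 1) → V) (Q R : Finset V) (S : Finset (Fin (k + l + 1) → V)) (p q : ℕ)
    (hp : k + 1 = p + (Z.filter fun i => i.val ≤ k).card)
    (hq : l = q + (Z.filter fun i => ¬ i.val ≤ k).card)
    (h : ∀ φ ∈ S, (∀ i ∈ Z, φ i = g i) ∧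
      ∀ i, i ∉ Z → (i.val ≤ k → φ i ∈ Q) ∧ (¬ i.val ≤ k → φ i ∈ R)) :
    S.card ≤ Q.card ^ p * R.card ^ q := by
  have hsub : S ⊆ Fintype.piFinset (fun i => if i ∈ Z then {g i} else if i.val ≤ k then Q else R) := by
    intro φ hφ
    rw [Fintype.mem_piFinset]
    intro i
    obtain ⟨h1, h2⟩ := h φ hφ
    split_ifs with hi hk
    · simp [h1 i hi]
    · exact (h2 i hi).1 hk
    · exact (h2 i hi).2 hk
  refine (Finset.card_le_card hsub).trans (le_of_eq ?_)
  rw [Fintype.card_piFinset]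
  have hc1 : (Finset.univ.filter fun i : Fin (k + l + 1) => i.val ≤ k).card = k + 1 := by
    have : (Finset.univ.filter fun i : Fin (k + l + 1) => i.val ≤ k)
      = (Finset.univ.filter fun i : Fin (k + l + 1) => i.val < k + 1) := by
      ext i; simp
    rw [this, Fin.card_filter_val_lt]
    omega
  have hc2 : (Finset.univ.filter fun i : Fin (k + l + 1) => ¬ i.val ≤ k).card = l := by
    have := Finset.card_filter_add_card_filter_not (s := (Finset.univ : Finset (Fin (k + l + 1))))
      (fun i => i.val ≤ k)
    rw [hc1] at this
    simp only [Finset.card_univ, Fintype.card_fin] at this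
    omega
  have : ∀ i : Fin (k + l + 1), (if i ∈ Z then {g i} else if i.val ≤ k then Q else R : Finset V).card
      = if i.val ≤ k then (if i ∈ Z then 1 else Q.card) else (if i ∈ Z then 1 else R.card) := by
    intro i; split_ifs <;> simp
  simp only [this]
  rw [Finset.prod_ite, Finset.prod_ite, Finset.prod_ite]
  simp only [Finset.prod_const_one, one_mul, Finset.prod_const]
  have key : ∀ (P : Fin (k + l + 1) → Prop) [DecidablePred P], ((Finset.univ.filter P).filter fun i => i ∉ Z).card
      + (Z.filter P).card = (Finset.univ.filter P).card := by
    intro P _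
    have h1 := Finset.card_filter_add_card_filter_not (s := Finset.univ.filter P) (fun i => i ∈ Z)
    have : (Finset.univ.filter P).filter (fun i => i ∈ Z) = Z.filter P := by
      ext i; simp [and_comm]
    rw [this] at h1
    omega
  have k1 := key (fun i => i.val ≤ k)
  have k2 := key (fun i => ¬ i.val ≤ k)
  rw [hc1] at k1
  rw [hc2] at k2
  congr 2 <;> omega

/-- loosened adjacency of a leaf position. -/
def relp (k : ℕ) {l : ℕ} {V : Type} (A : V → V → Prop) (i : Fin (k + l + 1)) (c v : V) : Prop :=
  (i.val ≤ k → A c v) ∧ (¬ i.val ≤ k → A v c)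

open Classical in
/-- Number of positions of the type of `z`. -/
noncomputable def mult (k l : ℕ) (z : Fin (k + l + 1)) : ℝ := if z.val ≤ k then (k : ℝ) else l

open Classical in
lemma outin_card {V : Type} [Fintype V] (A : V → V → Prop) (hopp : ∀ u v, A u v → ¬ A v u)
    (U : Finset V) (c : V) :
    (U.filter fun v => A c v).card + (U.filter fun v => A v c).card
      = (U.filter fun v => A c v ∨ A v c).card := by
  rw [Finset.filter_or, Finset.card_union_of_disjoint]
  rw [Finset.disjoint_filter]
  intro x _ h
  exact hopp _ _ h

open Classical in
lemma L0 {V : Type} [Fintype V] (k l : ℕ) (hl : 1 ≤ l)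
    (A : V → V → Prop) (hopp : ∀ u v, A u v → ¬ A v u) (c : V) (U : Finset V) (e : ℝ)
    (he : ((U.filter fun v => A c v ∨ A v c).card : ℝ) ≤ e)
    (S : Finset (Fin (k + l + 1) → V))
    (hS : ∀ φ ∈ S, φ 0 = c ∧ ∀ i, i ≠ 0 → relp k A i c (φ i) ∧ φ i ∈ U) :
    (S.card : ℝ) ≤ lam0 k l * e ^ (k + l) := by
  have hc := count_core k l {0} (fun _ => c) (U.filter fun v => A c v) (U.filter fun v => A v c) S
    k l (by simp [Finset.filter_singleton]) (by simp [Finset.filter_singleton]) (by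
      intro φ hφ
      obtain ⟨h0, h⟩ := hS φ hφ
      refine ⟨by simpa using h0, fun i hi => ?_⟩
      simp only [Finset.mem_singleton] at hi
      obtain ⟨h1, h2⟩ := h i hi
      simp only [Finset.mem_filter]
      exact ⟨fun hk => ⟨h2, h1.1 hk⟩, fun hk => ⟨h2, h1.2 hk⟩⟩)
  have hoi := outin_card A hopp U c
  have := lam0_bound k l hl (U.filter fun v => A c v).card (U.filter fun v => A v c).card e
    (by positivity) (by positivity) (by rw [← hoi] at he; exact_mod_cast he)
  refine le_trans ?_ this
  exact_mod_cast hc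

open Classical in
lemma L1 {V : Type} [Fintype V] (k l : ℕ) (hl : 1 ≤ l) (hlk : l ≤ k)
    (A : V → V → Prop) (hopp : ∀ u v, A u v → ¬ A v u) (c x : V) (U : Finset V) (e : ℝ)
    (he : ((U.filter fun v => A c v ∨ A v c).card : ℝ) ≤ e) (z : Fin (k + l + 1)) (hz : z ≠ 0)
    (S : Finset (Fin (k + l + 1) → V))
    (hS : ∀ φ ∈ S, φ 0 = c ∧ φ z = x ∧ ∀ i, i ≠ 0 → i ≠ z → relp k A i c (φ i) ∧ φ i ∈ U) :
    mult k l z * (S.card : ℝ) ≤ lam1 k l * e ^ (k + l - 1) := by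
  have hoi := outin_card A hopp U c
  rw [← hoi] at he
  push_cast at he
  have hz' : (0 : Fin (k + l + 1)) ∉ ({z} : Finset _) := by simpa using hz.symm
  have hh : ∀ φ ∈ S, (∀ i ∈ ({0, z} : Finset (Fin (k + l + 1))),
      φ i = (fun i => if i = 0 then c else x) i) ∧
      ∀ i, i ∉ ({0, z} : Finset (Fin (k + l + 1))) →
        (i.val ≤ k → φ i ∈ U.filter fun v => A c v) ∧
        (¬ i.val ≤ k → φ i ∈ U.filter fun v => A v c) := by
    intro φ hφ
    obtain ⟨h0, hx, h⟩ := hS φ hφ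
    refine ⟨?_, fun i hi => ?_⟩
    · intro i hi
      simp only [Finset.mem_insert, Finset.mem_singleton] at hi
      rcases hi with rfl | rfl
      · simpa using h0
      · simpa [hz] using hx
    simp only [Finset.mem_insert, Finset.mem_singleton, not_or] at hi
    obtain ⟨h1, h2⟩ := h i hi.1 hi.2
    simp only [Finset.mem_filter]
    exact ⟨fun hk => ⟨h2, h1.1 hk⟩, fun hk => ⟨h2, h1.2 hk⟩⟩
  unfold mult
  split_ifs with hzk
  · have hc := count_core k l {0, z} _ _ _ S (k - 1) l
      (by simp [Finset.filter_insert, Finset.filter_singleton, hzk, Finset.card_insert_of_notMem hz']; omega)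
      (by simp [Finset.filter_insert, Finset.filter_singleton, hzk]) hh
    refine le_trans ?_ (lam1_out k l hl hlk _ _ e (by positivity) (by positivity) he)
    gcongr
    exact_mod_cast hc
  · have hc := count_core k l {0, z} _ _ _ S k (l - 1)
      (by simp [Finset.filter_insert, Finset.filter_singleton, hzk])
      (by simp [Finset.filter_insert, Finset.filter_singleton, not_le.1 hzk]; omega) hh
    refine le_trans ?_ (lam1_in k l hl hlk _ _ e (by positivity) (by positivity) he)
    gcongr
    exact_mod_cast hc

open Classical in
lemma union_bound {α β : Type} (S : Finset α) (W : Finset β) (T : β → Finset α) (r B : ℝ)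
    (hr : 0 ≤ r) (hB : 0 ≤ B) (hS : ∀ s ∈ S, ∃ w ∈ W, s ∈ T w)
    (hT : ∀ w ∈ W, r * ((W.card : ℝ) * (T w).card) ≤ B) : r * (S.card : ℝ) ≤ B := by
  rcases W.eq_empty_or_nonempty with rfl | hW
  · have : S = ∅ := by
      rw [Finset.eq_empty_iff_forall_notMem]
      intro s hs
      obtain ⟨w, hw, _⟩ := hS s hs
      simp at hw
    simpa [this] using hB
  have h1 : S.card ≤ ∑ w ∈ W, (T w).card := by
    refine le_trans (Finset.card_le_card ?_) Finset.card_biUnion_le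
    intro s hs
    obtain ⟨w, hw, h⟩ := hS s hs
    exact Finset.mem_biUnion.2 ⟨w, hw, h⟩
  have h2 : (S.card : ℝ) ≤ ∑ w ∈ W, ((T w).card : ℝ) := by exact_mod_cast h1
  have hWpos : (0 : ℝ) < W.card := by exact_mod_cast hW.card_pos
  have h3 : ∑ w ∈ W, (W.card : ℝ) * (r * ((T w).card : ℝ)) ≤ ∑ w ∈ W, B := by
    apply Finset.sum_le_sum
    intro w hw
    have := hT w hw
    linarith
  rw [← Finset.mul_sum, ← Finset.mul_sum, Finset.sum_const, nsmul_eq_mul] at h3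
  have h4 := le_of_mul_le_mul_left h3 hWpos
  refine le_trans ?_ h4
  gcongr

open Classical in
lemma sum_bound {α β : Type} (S : Finset α) (W : Finset β) (T : β → Finset α) (r : ℝ) (g : β → ℝ)
    (hr : 0 ≤ r) (hS : ∀ s ∈ S, ∃ w ∈ W, s ∈ T w)
    (hT : ∀ w ∈ W, r * ((T w).card : ℝ) ≤ g w) : r * (S.card : ℝ) ≤ ∑ w ∈ W, g w := by
  have h1 : S.card ≤ ∑ w ∈ W, (T w).card := by
    refine le_trans (Finset.card_le_card ?_) Finset.card_biUnion_le
    intro s hs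
    obtain ⟨w, hw, h⟩ := hS s hs
    exact Finset.mem_biUnion.2 ⟨w, hw, h⟩
  have h2 : (S.card : ℝ) ≤ ∑ w ∈ W, ((T w).card : ℝ) := by exact_mod_cast h1
  calc r * (S.card : ℝ) ≤ r * ∑ w ∈ W, ((T w).card : ℝ) := by gcongr
    _ = ∑ w ∈ W, r * ((T w).card : ℝ) := by rw [Finset.mul_sum]
    _ ≤ _ := Finset.sum_le_sum hT

lemma card_out (k l : ℕ) :
    (Finset.univ.filter fun i : Fin (k + l + 1) => i ≠ 0 ∧ i.val ≤ k).card = k := by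
  have h : (Finset.univ.filter fun i : Fin (k + l + 1) => i ≠ 0 ∧ i.val ≤ k)
      = (Finset.univ.filter fun i : Fin (k + l + 1) => i.val < k + 1).erase 0 := by
    ext i; simp
  rw [h, Finset.card_erase_of_mem (by simp), Fin.card_filter_val_lt]
  omega

lemma card_in (k l : ℕ) :
    (Finset.univ.filter fun i : Fin (k + l + 1) => i ≠ 0 ∧ ¬ i.val ≤ k).card = l := by
  have h := Finset.card_filter_add_card_filter_not
    (s := (Finset.univ.filter fun i : Fin (k + l + 1) => i ≠ 0)) (fun i => i.val ≤ k)
  rw [Finset.filter_filter, Finset.filter_filter, card_out] at h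
  have h2 : (Finset.univ.filter fun i : Fin (k + l + 1) => i ≠ 0).card = k + l := by
    rw [Finset.filter_ne' Finset.univ, Finset.card_erase_of_mem (by simp)]
    simp
  omega

open Classical in
lemma L1' {V : Type} [Fintype V] (k l : ℕ) (hl : 1 ≤ l) (hlk : l ≤ k)
    (A : V → V → Prop) (hopp : ∀ u v, A u v → ¬ A v u) (c x : V) (U : Finset V) (e : ℝ)
    (he : ((U.filter fun v => A c v ∨ A v c).card : ℝ) ≤ e)
    (S : Finset (Fin (k + l + 1) → V))
    (hS : ∀ φ ∈ S, φ 0 = c ∧ (∀ i, i ≠ 0 → relp k A i c (φ i)) ∧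
      ∃ w, w ≠ 0 ∧ φ w = x ∧ ∀ i, i ≠ 0 → i ≠ w → φ i ∈ U) :
    (S.card : ℝ) ≤ lam1 k l * e ^ (k + l - 1) := by
  have he0 : 0 ≤ e := le_trans (by positivity) he
  have hB : 0 ≤ lam1 k l * e ^ (k + l - 1) := mul_nonneg (lam1_nonneg k l hl) (by positivity)
  have hL : ∀ w : Fin (k + l + 1), w ≠ 0 → mult k l w * ((S.filter fun φ => φ w = x ∧
      ∀ i, i ≠ 0 → i ≠ w → φ i ∈ U).card : ℝ) ≤ lam1 k l * e ^ (k + l - 1) := by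
    intro w hw
    apply L1 k l hl hlk A hopp c x U e he w hw
    intro φ hφ
    rw [Finset.mem_filter] at hφ
    obtain ⟨h0, h1, -⟩ := hS φ hφ.1
    exact ⟨h0, hφ.2.1, fun i hi hiw => ⟨h1 i hi, hφ.2.2 i hi hiw⟩⟩
  by_cases hcx : A c x
  · have := union_bound S (Finset.univ.filter fun i : Fin (k + l + 1) => i ≠ 0 ∧ i.val ≤ k)
      (fun w => S.filter fun φ => φ w = x ∧ ∀ i, i ≠ 0 → i ≠ w → φ i ∈ U) 1 _ zero_le_one hB ?_ ?_
    · simpa using this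
    · intro φ hφ
      obtain ⟨h0, h1, w, hw, hwx, h2⟩ := hS φ hφ
      refine ⟨w, ?_, Finset.mem_filter.2 ⟨hφ, hwx, h2⟩⟩
      simp only [Finset.mem_filter, Finset.mem_univ, true_and]
      refine ⟨hw, ?_⟩
      by_contra hk
      have := (h1 w hw).2 hk
      rw [hwx] at this
      exact hopp _ _ hcx this
    · intro w hw
      simp only [Finset.mem_filter, Finset.mem_univ, true_and] at hw
      rw [card_out, one_mul]
      have := hL w hw.1
      rwa [mult, if_pos hw.2] at this
  · have := union_bound S (Finset.univ.filter fun i : Fin (k + l + 1) => i ≠ 0 ∧ ¬ i.val ≤ k)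
      (fun w => S.filter fun φ => φ w = x ∧ ∀ i, i ≠ 0 → i ≠ w → φ i ∈ U) 1 _ zero_le_one hB ?_ ?_
    · simpa using this
    · intro φ hφ
      obtain ⟨h0, h1, w, hw, hwx, h2⟩ := hS φ hφ
      refine ⟨w, ?_, Finset.mem_filter.2 ⟨hφ, hwx, h2⟩⟩
      simp only [Finset.mem_filter, Finset.mem_univ, true_and]
      refine ⟨hw, fun hk => ?_⟩
      have := (h1 w hw).1 hk
      rw [hwx] at this
      exact hcx this
    · intro w hw
      simp only [Finset.mem_filter, Finset.mem_univ, true_and] at hw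
      rw [card_in, one_mul]
      have := hL w hw.1
      rwa [mult, if_neg hw.2] at this

open Classical in
lemma L2 {V : Type} [Fintype V] (k l : ℕ) (hl : 1 ≤ l) (hk : 2 ≤ k)
    (A : V → V → Prop) (hopp : ∀ u v, A u v → ¬ A v u) (c y x : V) (U : Finset V) (e : ℝ)
    (he : ((U.filter fun v => A c v ∨ A v c).card : ℝ) ≤ e) (z : Fin (k + l + 1)) (hz : z ≠ 0)
    (S : Finset (Fin (k + l + 1) → V))
    (hS : ∀ φ ∈ S, φ 0 = c ∧ φ z = y ∧ (∀ i, i ≠ 0 → relp k A i c (φ i)) ∧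
      ∃ w, w ≠ 0 ∧ w ≠ z ∧ φ w = x ∧ ∀ i, i ≠ 0 → i ≠ z → i ≠ w → φ i ∈ U) :
    mult k l z * (S.card : ℝ) ≤ Mco k l * e ^ (k + l - 2) := by
  have he0 : 0 ≤ e := le_trans (by positivity) he
  have hB : 0 ≤ Mco k l * e ^ (k + l - 2) := mul_nonneg (Mco_nonneg k l hl) (by positivity)
  have hoi := outin_card A hopp U c
  rw [← hoi] at he
  push_cast at he
  have hm0 : 0 ≤ mult k l z := by unfold mult; split_ifs <;> positivity
  set T : Fin (k + l + 1) → Finset (Fin (k + l + 1) → V) := fun w => S.filter fun φ => φ w = x ∧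
      ∀ i, i ≠ 0 → i ≠ z → i ≠ w → φ i ∈ U with hTdef
  have hh : ∀ w, w ≠ 0 → w ≠ z → ∀ φ ∈ T w, (∀ i ∈ ({0, z, w} : Finset (Fin (k + l + 1))),
      φ i = (fun i => if i = 0 then c else if i = z then y else x) i) ∧
      ∀ i, i ∉ ({0, z, w} : Finset (Fin (k + l + 1))) →
        (i.val ≤ k → φ i ∈ U.filter fun v => A c v) ∧
        (¬ i.val ≤ k → φ i ∈ U.filter fun v => A v c) := by
    intro w hw hwz φ hφ
    rw [hTdef] at hφ
    simp only [Finset.mem_filter] at hφ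
    obtain ⟨hφ, hwx, hU⟩ := hφ
    obtain ⟨h0, hy, h, -⟩ := hS φ hφ
    refine ⟨?_, fun i hi => ?_⟩
    · intro i hi
      simp only [Finset.mem_insert, Finset.mem_singleton] at hi
      rcases hi with rfl | rfl | rfl
      · simpa using h0
      · simpa [hz] using hy
      · simpa [hw, hwz] using hwx
    simp only [Finset.mem_insert, Finset.mem_singleton, not_or] at hi
    have h1 := h i hi.1
    have h2 := hU i hi.1 hi.2.1 hi.2.2
    simp only [Finset.mem_filter]
    exact ⟨fun hk => ⟨h2, h1.1 hk⟩, fun hk => ⟨h2, h1.2 hk⟩⟩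
  have hmem : ∀ φ ∈ S, ∃ w, w ≠ 0 ∧ w ≠ z ∧ φ ∈ T w ∧ relp k A w c x := by
    intro φ hφ
    obtain ⟨h0, hy, h1, w, hw, hwz, hwx, h2⟩ := hS φ hφ
    refine ⟨w, hw, hwz, Finset.mem_filter.2 ⟨hφ, hwx, h2⟩, ?_⟩
    rw [← hwx]; exact h1 w hw
  by_cases hcx : A c x
  · apply union_bound S
      ((Finset.univ.filter fun i : Fin (k + l + 1) => i ≠ 0 ∧ i.val ≤ k).erase z)
      T _ _ hm0 hB
    · intro φ hφ
      obtain ⟨w, hw, hwz, hwT, hrel⟩ := hmem φ hφ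
      refine ⟨w, ?_, hwT⟩
      simp only [Finset.mem_erase, Finset.mem_filter, Finset.mem_univ, true_and]
      refine ⟨hwz, hw, ?_⟩
      by_contra hk
      exact hopp _ _ hcx (hrel.2 hk)
    · intro w hw
      simp only [Finset.mem_erase, Finset.mem_filter, Finset.mem_univ, true_and] at hw
      obtain ⟨hwz, hw0, hwk⟩ := hw
      have hZ1 : z ∉ ({w} : Finset (Fin (k + l + 1))) := by simpa using hwz.symm
      have hZ2 : (0 : Fin (k + l + 1)) ∉ ({z, w} : Finset (Fin (k + l + 1))) := by
        simp [hz.symm, hw0.symm]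
      have hZ3 : (0 : Fin (k + l + 1)) ∉ ({w} : Finset (Fin (k + l + 1))) := by
        simp [hw0.symm]
      by_cases hzk : z.val ≤ k
      · rw [Finset.card_erase_of_mem (by simp [hz, hzk]), card_out, mult, if_pos hzk]
        have hc := count_core k l {0, z, w} _ _ _ (T w) (k - 2) l
          (by simp [Finset.filter_insert, Finset.filter_singleton, hzk, hwk,
                Finset.card_insert_of_notMem hZ1, Finset.card_insert_of_notMem hZ2]; omega)
          (by simp [Finset.filter_insert, Finset.filter_singleton, not_lt.2 hzk, not_lt.2 hwk]) (hh w hw0 hwz)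
        refine le_trans ?_ (M_oo k l hk _ _ e (by positivity) (by positivity) he)
        gcongr
        exact_mod_cast hc
      · rw [Finset.erase_eq_of_notMem (by simp [hzk]), card_out, mult, if_neg hzk]
        have hc := count_core k l {0, z, w} _ _ _ (T w) (k - 1) (l - 1)
          (by simp [Finset.filter_insert, Finset.filter_singleton, hzk, hwk,
                Finset.card_insert_of_notMem hZ3]; omega)
          (by simp [Finset.filter_insert, Finset.filter_singleton, not_le.1 hzk, not_lt.2 hwk]; omega)
          (hh w hw0 hwz)
        have := M_oi k l hl (by omega) _ _ e (by positivity) (by positivity) he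
        refine le_trans ?_ this
        rw [mul_left_comm]
        gcongr
        exact_mod_cast hc
  · apply union_bound S
      ((Finset.univ.filter fun i : Fin (k + l + 1) => i ≠ 0 ∧ ¬ i.val ≤ k).erase z)
      T _ _ hm0 hB
    · intro φ hφ
      obtain ⟨w, hw, hwz, hwT, hrel⟩ := hmem φ hφ
      refine ⟨w, ?_, hwT⟩
      simp only [Finset.mem_erase, Finset.mem_filter, Finset.mem_univ, true_and]
      exact ⟨hwz, hw, fun hk => hcx (hrel.1 hk)⟩
    · intro w hw
      simp only [Finset.mem_erase, Finset.mem_filter, Finset.mem_univ, true_and] at hw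
      obtain ⟨hwz, hw0, hwk⟩ := hw
      have hZ1 : z ∉ ({w} : Finset (Fin (k + l + 1))) := by simpa using hwz.symm
      have hZ3 : (0 : Fin (k + l + 1)) ∉ ({z} : Finset (Fin (k + l + 1))) := by
        simp [hz.symm]
      by_cases hzk : z.val ≤ k
      · rw [Finset.erase_eq_of_notMem (by simp [hzk]), card_in, mult, if_pos hzk]
        have hc := count_core k l {0, z, w} _ _ _ (T w) (k - 1) (l - 1)
          (by simp [Finset.filter_insert, Finset.filter_singleton, hzk, hwk,
                Finset.card_insert_of_notMem hZ3]; omega)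
          (by simp [Finset.filter_insert, Finset.filter_singleton, not_lt.2 hzk, not_le.1 hwk]; omega)
          (hh w hw0 hwz)
        have := M_oi k l hl (by omega) _ _ e (by positivity) (by positivity) he
        refine le_trans ?_ this
        gcongr
        exact_mod_cast hc
      · rw [Finset.card_erase_of_mem (by simp [hz, not_le.1 hzk]), card_in, mult, if_neg hzk]
        by_cases hl2 : 2 ≤ l
        · have hc := count_core k l {0, z, w} _ _ _ (T w) k (l - 2)
            (by simp [Finset.filter_insert, Finset.filter_singleton, hzk, hwk])
            (by simp [Finset.filter_insert, Finset.filter_singleton, not_le.1 hwk, not_le.1 hzk,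
                  Finset.card_insert_of_notMem hZ1]; omega) (hh w hw0 hwz)
          refine le_trans ?_ (M_ii k l hl _ _ e (by positivity) (by positivity) he)
          gcongr
          exact_mod_cast hc
        · obtain rfl : l = 1 := by omega
          simpa using hB

lemma emb_rel {k l : ℕ} {V : Type} {A : V → V → Prop} {φ : Fin (k + l + 1) → V}
    (h : IsStarEmb k l A φ) (i : Fin (k + l + 1)) (hi : i ≠ 0) : relp k A i (φ 0) (φ i) := by
  have hi' : i.val ≠ 0 := fun h => hi (Fin.ext h)
  constructor
  · intro hk
    refine (h.2 0 i).1 (Or.inl ⟨rfl, by omega, hk⟩)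
  · intro hk
    exact (h.2 i 0).1 (Or.inr ⟨rfl, by omega⟩)

lemma emb_non {k l : ℕ} {V : Type} {A : V → V → Prop} {φ : Fin (k + l + 1) → V}
    (h : IsStarEmb k l A φ) (i j : Fin (k + l + 1)) (hi : i ≠ 0) (hj : j ≠ 0) :
    ¬ A (φ i) (φ j) := by
  have hi' : i.val ≠ 0 := fun h => hi (Fin.ext h)
  have hj' : j.val ≠ 0 := fun h => hj (Fin.ext h)
  rw [← h.2 i j]
  unfold StarArc
  omega

open Classical in
lemma center_bound {V : Type} [Fintype V] (k l : ℕ) (hl : 1 ≤ l) (hlk : l ≤ k)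
    (A : V → V → Prop) (hopp : ∀ u v, A u v → ¬ A v u) (X : Finset V) (y : V) (B E : ℝ)
    (hB : ((Xᶜ.filter fun v => A y v ∨ A v y).card : ℝ) ≤ B)
    (hE : ∀ x ∈ X, ((Finset.univ.filter fun v => ¬ (A x v ∨ A v x)).card : ℝ) ≤ E) :
    ((Finset.univ.filter fun φ => IsStarEmb k l A φ ∧ φ 0 = y).card : ℝ) ≤
      lam0 k l * B ^ (k + l) +
        ((X.filter fun v => A y v ∨ A v y).card : ℝ) * (lam1 k l * E ^ (k + l - 1)) := by
  set S := Finset.univ.filter fun φ => IsStarEmb k l A φ ∧ φ 0 = y with hSdef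
  set S1 := S.filter fun φ => ∀ i, i ≠ 0 → φ i ∈ Xᶜ
  set S2 := S.filter fun φ => ¬ ∀ i, i ≠ 0 → φ i ∈ Xᶜ
  have hsplit : S1.card + S2.card = S.card := Finset.card_filter_add_card_filter_not _
  have hSmem : ∀ φ ∈ S, IsStarEmb k l A φ ∧ φ 0 = y := by
    intro φ hφ; simpa [hSdef] using hφ
  have h1 : (S1.card : ℝ) ≤ lam0 k l * B ^ (k + l) := by
    apply L0 k l hl A hopp y Xᶜ B hB
    intro φ hφ
    rw [Finset.mem_filter] at hφ
    obtain ⟨he, h0⟩ := hSmem φ hφ.1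
    refine ⟨h0, fun i hi => ⟨?_, hφ.2 i hi⟩⟩
    rw [← h0]; exact emb_rel he i hi
  have h2 : 1 * (S2.card : ℝ) ≤ ∑ x ∈ X.filter fun v => A y v ∨ A v y, (lam1 k l * E ^ (k + l - 1)) := by
    apply sum_bound S2 _ (fun x => S2.filter fun φ => ∃ w, w ≠ 0 ∧ φ w = x) 1 _ zero_le_one
    · intro φ hφ
      have hφ' := hφ
      simp only [S2, Finset.mem_filter] at hφ
      obtain ⟨he, h0⟩ := hSmem φ hφ.1
      have := hφ.2
      push Not at this
      obtain ⟨w, hw, hwX⟩ := this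
      refine ⟨φ w, ?_, Finset.mem_filter.2 ⟨hφ', w, hw, rfl⟩⟩
      rw [Finset.mem_filter]
      refine ⟨by simpa using hwX, ?_⟩
      have := emb_rel he w hw
      rw [h0] at this
      by_cases hk : w.val ≤ k
      · exact Or.inl (this.1 hk)
      · exact Or.inr (this.2 hk)
    · intro x hx
      rw [Finset.mem_filter] at hx
      rw [one_mul]
      apply L1' k l hl hlk A hopp y x (Finset.univ.filter fun v => ¬ (A x v ∨ A v x)) E
      · refine le_trans ?_ (hE x hx.1)
        exact_mod_cast Finset.card_le_card (Finset.filter_subset _ _)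
      · intro φ hφ
        simp only [S2, Finset.mem_filter] at hφ
        obtain ⟨⟨hφ, -⟩, w, hw, hwx⟩ := hφ
        obtain ⟨he, h0⟩ := hSmem φ hφ
        refine ⟨h0, fun i hi => ?_, w, hw, hwx, fun i hi hiw => ?_⟩
        · rw [← h0]; exact emb_rel he i hi
        · simp only [Finset.mem_filter, Finset.mem_univ, true_and]
          rw [← hwx]
          rintro (h | h)
          · exact emb_non he _ _ hw hi h
          · exact emb_non he _ _ hi hw h
  rw [Finset.sum_const, nsmul_eq_mul, one_mul] at h2
  rw [← hsplit]
  push_cast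
  linarith

open Classical in
lemma leaf_bound {V : Type} [Fintype V] (k l : ℕ) (hl : 1 ≤ l) (hlk : l ≤ k) (hk2 : 2 ≤ k)
    (A : V → V → Prop) (hopp : ∀ u v, A u v → ¬ A v u) (X : Finset V) (y : V) (B C E : ℝ)
    (hB : ∀ c ∈ Xᶜ, ((Xᶜ.filter fun v => A c v ∨ A v c).card : ℝ) ≤ B)
    (hC : ((Xᶜ.filter fun v => ¬ (A y v ∨ A v y)).card : ℝ) ≤ C)
    (hE : ∀ x ∈ X, ((Finset.univ.filter fun v => ¬ (A x v ∨ A v x)).card : ℝ) ≤ E)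
    (z : Fin (k + l + 1)) (hz : z ≠ 0) :
    mult k l z * ((Finset.univ.filter fun φ => IsStarEmb k l A φ ∧ φ z = y).card : ℝ) ≤
      ((X.filter fun c => relp k A z c y).card : ℝ) * (lam1 k l * C ^ (k + l - 1)) +
      ((Xᶜ.filter fun c => relp k A z c y).card : ℝ) * (lam1 k l * B ^ (k + l - 1)) +
      (((X.filter fun c => relp k A z c y).card : ℝ) + ((Xᶜ.filter fun c => relp k A z c y).card : ℝ))
        * (((X.filter fun v => ¬ (A y v ∨ A v y)).card : ℝ) * (Mco k l * E ^ (k + l - 2))) := by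
  set S := Finset.univ.filter fun φ => IsStarEmb k l A φ ∧ φ z = y with hSdef
  have hSmem : ∀ φ ∈ S, IsStarEmb k l A φ ∧ φ z = y := by
    intro φ hφ; simpa [hSdef] using hφ
  have hm0 : 0 ≤ mult k l z := by unfold mult; split_ifs <;> positivity
  set R : ℝ := ((X.filter fun v => ¬ (A y v ∨ A v y)).card : ℝ) * (Mco k l * E ^ (k + l - 2)) with hR
  -- stars with another leaf in X
  have hH : ∀ c, mult k l z * (((S.filter fun φ => φ 0 = c).filter fun φ =>
      ¬ ∀ i, i ≠ 0 → i ≠ z → φ i ∈ Xᶜ).card : ℝ) ≤ R := by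
    intro c
    set S2 := (S.filter fun φ => φ 0 = c).filter fun φ => ¬ ∀ i, i ≠ 0 → i ≠ z → φ i ∈ Xᶜ with hS2
    have h2 : mult k l z * (S2.card : ℝ) ≤
        ∑ x ∈ X.filter fun v => ¬ (A y v ∨ A v y), (Mco k l * E ^ (k + l - 2)) := by
      apply sum_bound S2 _ (fun x => S2.filter fun φ => ∃ w, w ≠ 0 ∧ w ≠ z ∧ φ w = x) _ _ hm0
      · intro φ hφ
        have hφ' := hφ
        simp only [S2, Finset.mem_filter] at hφ
        obtain ⟨he, hy⟩ := hSmem φ hφ.1.1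
        have := hφ.2
        push Not at this
        obtain ⟨w, hw, hwz, hwX⟩ := this
        refine ⟨φ w, ?_, Finset.mem_filter.2 ⟨hφ', w, hw, hwz, rfl⟩⟩
        rw [Finset.mem_filter]
        refine ⟨by simpa using hwX, ?_⟩
        rw [← hy]
        rintro (h | h)
        · exact emb_non he _ _ hz hw h
        · exact emb_non he _ _ hw hz h
      · intro x hx
        rw [Finset.mem_filter] at hx
        apply L2 k l hl hk2 A hopp c y x (Finset.univ.filter fun v => ¬ (A x v ∨ A v x)) E _ z hz
        · intro φ hφ
          simp only [S2, Finset.mem_filter] at hφ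
          obtain ⟨⟨⟨hφ, h0⟩, -⟩, w, hw, hwz, hwx⟩ := hφ
          obtain ⟨he, hy⟩ := hSmem φ hφ
          refine ⟨h0, hy, fun i hi => ?_, w, hw, hwz, hwx, fun i hi hiz hiw => ?_⟩
          · rw [← h0]; exact emb_rel he i hi
          · simp only [Finset.mem_filter, Finset.mem_univ, true_and]
            rw [← hwx]
            rintro (h | h)
            · exact emb_non he _ _ hw hi h
            · exact emb_non he _ _ hi hw h
        · refine le_trans ?_ (hE x hx.1)
          exact_mod_cast Finset.card_le_card (Finset.filter_subset _ _)
    rw [Finset.sum_const, nsmul_eq_mul] at h2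
    exact h2
  -- stars with all other leaves in Y
  have hG : ∀ c, mult k l z * (((S.filter fun φ => φ 0 = c).filter fun φ =>
      ∀ i, i ≠ 0 → i ≠ z → φ i ∈ Xᶜ).card : ℝ) ≤
      if c ∈ X then lam1 k l * C ^ (k + l - 1) else lam1 k l * B ^ (k + l - 1) := by
    intro c
    split_ifs with hc
    · apply L1 k l hl hlk A hopp c y (Xᶜ.filter fun v => ¬ (A y v ∨ A v y)) C _ z hz
      · intro φ hφ
        simp only [Finset.mem_filter] at hφ
        obtain ⟨⟨hφ, h0⟩, hX⟩ := hφ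
        obtain ⟨he, hy⟩ := hSmem φ hφ
        refine ⟨h0, hy, fun i hi hiz => ⟨?_, ?_⟩⟩
        · rw [← h0]; exact emb_rel he i hi
        · rw [Finset.mem_filter]
          refine ⟨hX i hi hiz, ?_⟩
          rw [← hy]
          rintro (h | h)
          · exact emb_non he _ _ hz hi h
          · exact emb_non he _ _ hi hz h
      · refine le_trans ?_ hC
        exact_mod_cast Finset.card_le_card (Finset.filter_subset _ _)
    · apply L1 k l hl hlk A hopp c y Xᶜ B (hB c (by simpa using hc)) z hz
      intro φ hφ
      simp only [Finset.mem_filter] at hφ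
      obtain ⟨⟨hφ, h0⟩, hX⟩ := hφ
      obtain ⟨he, hy⟩ := hSmem φ hφ
      refine ⟨h0, hy, fun i hi hiz => ⟨?_, hX i hi hiz⟩⟩
      rw [← h0]; exact emb_rel he i hi
  have hmain : mult k l z * (S.card : ℝ) ≤ ∑ c ∈ Finset.univ.filter fun c => relp k A z c y,
      ((if c ∈ X then lam1 k l * C ^ (k + l - 1) else lam1 k l * B ^ (k + l - 1)) + R) := by
    apply sum_bound S _ (fun c => S.filter fun φ => φ 0 = c) _ _ hm0
    · intro φ hφ
      refine ⟨φ 0, ?_, Finset.mem_filter.2 ⟨hφ, rfl⟩⟩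
      obtain ⟨he, hy⟩ := hSmem φ hφ
      simp only [Finset.mem_filter, Finset.mem_univ, true_and]
      rw [← hy]; exact emb_rel he z hz
    · intro c _
      have hsplit := Finset.card_filter_add_card_filter_not (s := S.filter fun φ => φ 0 = c)
        (fun φ => ∀ i, i ≠ 0 → i ≠ z → φ i ∈ Xᶜ)
      rw [← hsplit]
      push_cast
      have h1 := hH c
      have h2 := hG c
      rw [mul_add]
      exact add_le_add h2 h1
  refine hmain.trans (le_of_eq ?_)
  have hXf : (Finset.univ.filter fun c => relp k A z c y).filter (fun c => c ∈ X)
      = X.filter fun c => relp k A z c y := by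
    ext c; simp [and_comm]
  have hXf' : (Finset.univ.filter fun c => relp k A z c y).filter (fun c => c ∉ X)
      = Xᶜ.filter fun c => relp k A z c y := by
    ext c; simp [and_comm]
  have hcard := Finset.card_filter_add_card_filter_not
    (s := Finset.univ.filter fun c => relp k A z c y) (fun c => c ∈ X)
  rw [Finset.sum_add_distrib, Finset.sum_ite, Finset.sum_const, Finset.sum_const, Finset.sum_const,
    ← hcard, hXf, hXf']
  simp only [nsmul_eq_mul]
  push_cast
  ring

theorem stmt11 (k l : ℕ) (hl : 1 ≤ l) (hlk : l ≤ k) (hm : 6 ≤ k + l)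
    (V : Type) [Fintype V] (A : V → V → Prop)
    (hirr : Irreflexive A) (hopp : ∀ u v, A u v → ¬ A v u) (hn : 1 ≤ Fintype.card V)
    (hX : (bigX A).Nonempty) (hY : (bigY A).Nonempty) :
    lam1 k l * alphaX A * ((1 - alphaX A - betaY A) ^ (k + l - 1) + (1 - Dmin A) ^ (k + l - 1))
        + (lam0 k l + lam1 k l) * betaY A ^ (k + l) ≥ Smin k l A ∨
    (lam0 k l + lam1 k l) * betaY A ^ (k + l)
        + (((k : ℝ) + l) * ((k : ℝ) + l - 1) / (Nat.choose (k + l) k : ℝ))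
          * alphaX A * (alphaX A + betaY A) * (1 - Dmin A) ^ (k + l - 2) ≥ Smin k l A := by
  classical
  have hk2 : 2 ≤ k := by omega
  set n : ℝ := (Fintype.card V : ℝ) with hndef
  have hn0 : 0 < n := by
    have : (1 : ℝ) ≤ n := by rw [hndef]; exact_mod_cast hn
    linarith
  set X : Finset V := Finset.univ.filter fun v => v ∈ bigX A with hXdef
  have hmX : ∀ v, v ∈ X ↔ v ∈ bigX A := by intro v; simp [hXdef]
  have hmY : ∀ v, v ∈ Xᶜ ↔ v ∈ bigY A := by
    intro v; rw [Finset.mem_compl, hmX]; rfl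
  have hrho : ∀ v, rho A v * n = ((Finset.univ.filter fun u => A v u ∨ A u v).card : ℝ) := by
    intro v
    unfold rho
    rw [div_mul_cancel₀ _ hn0.ne', Nat.card_eq_fintype_card, Fintype.card_subtype]
  have hrhoY : ∀ v, rhoIn A (bigY A) v * n = ((Xᶜ.filter fun u => A v u ∨ A u v).card : ℝ) := by
    intro v
    unfold rhoIn
    rw [div_mul_cancel₀ _ hn0.ne', Nat.card_eq_fintype_card, Fintype.card_subtype]
    congr 2
    ext u
    rw [Finset.mem_filter, Finset.mem_filter, hmY]
    simp [and_comm]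
  have hα : alphaX A * n = (X.card : ℝ) := by
    unfold alphaX muSet
    rw [div_mul_cancel₀ _ hn0.ne', Nat.card_eq_fintype_card, hXdef, ← Fintype.card_subtype]
  have hxpos : (0 : ℝ) < X.card := by
    obtain ⟨x, hx⟩ := hX
    exact_mod_cast Finset.card_pos.2 ⟨x, (hmX x).2 hx⟩
  obtain ⟨y, hyY, hyβ⟩ : betaY A ∈ (fun y => rhoIn A (bigY A) y) '' bigY A :=
    Set.Nonempty.csSup_mem (hY.image _) (Set.toFinite _)
  simp only at hyβ
  have hβmax : ∀ c ∈ bigY A, rhoIn A (bigY A) c ≤ betaY A := fun c hc =>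
    le_csSup (Set.toFinite _).bddAbove ⟨c, hc, rfl⟩
  have hDmin : ∀ x ∈ bigX A, Dmin A ≤ rho A x := fun x hx =>
    csInf_le (Set.toFinite _).bddBelow ⟨x, hx, rfl⟩
  have hS : Smin k l A ≤ ((k : ℝ) + l + 1) * sVert k l A y := by
    unfold Smin
    gcongr
    exact csInf_le (Set.finite_range _).bddBelow ⟨y, rfl⟩
  set α := alphaX A
  set β := betaY A
  set D := Dmin A
  set B : ℝ := β * n with hBdef
  set C : ℝ := (1 - α - β) * n with hCdef
  set E : ℝ := (1 - D) * n with hEdef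
  have hBy : ((Xᶜ.filter fun v => A y v ∨ A v y).card : ℝ) = B := by
    rw [← hrhoY, hyβ]
  have hB : ∀ c ∈ Xᶜ, ((Xᶜ.filter fun v => A c v ∨ A v c).card : ℝ) ≤ B := by
    intro c hc
    rw [← hrhoY]
    have := hβmax c ((hmY c).1 hc)
    rw [hBdef]
    gcongr
  have hC : ((Xᶜ.filter fun v => ¬ (A y v ∨ A v y)).card : ℝ) ≤ C := by
    have h := Finset.card_filter_add_card_filter_not (s := Xᶜ) (fun v => A y v ∨ A v y)
    have h2 := Finset.card_add_card_compl X
    have h' : ((Xᶜ.filter fun v => A y v ∨ A v y).card : ℝ) +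
      ((Xᶜ.filter fun v => ¬ (A y v ∨ A v y)).card : ℝ) = (Xᶜ.card : ℝ) := by exact_mod_cast h
    have h2' : (X.card : ℝ) + (Xᶜ.card : ℝ) = n := by rw [hndef]; exact_mod_cast h2
    rw [hBy] at h'
    rw [hCdef]
    linarith
  have hE : ∀ x ∈ X, ((Finset.univ.filter fun v => ¬ (A x v ∨ A v x)).card : ℝ) ≤ E := by
    intro x hx
    have h := Finset.card_filter_add_card_filter_not (s := (Finset.univ : Finset V))
      (fun v => A x v ∨ A v x)
    have h' : ((Finset.univ.filter fun v => A x v ∨ A v x).card : ℝ) +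
      ((Finset.univ.filter fun v => ¬ (A x v ∨ A v x)).card : ℝ) = n := by
      rw [hndef]; exact_mod_cast h
    rw [← hrho] at h'
    have h3 : D * n ≤ rho A x * n := by
      have := hDmin x ((hmX x).1 hx)
      gcongr
    rw [hEdef]
    linarith
  have hE0 : 0 ≤ E := by
    obtain ⟨x, hx⟩ := hX
    exact le_trans (by positivity) (hE x ((hmX x).2 hx))
  have hv1 : (1 : Fin (k + l + 1)).val = 1 := by
    rw [Fin.val_one']; exact Nat.mod_eq_of_lt (by omega)
  have hv2 : (Fin.ofNat (k + l + 1) (k + 1)).val = k + 1 := by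
    exact Nat.mod_eq_of_lt (by omega)
  have h10 : (1 : Fin (k + l + 1)) ≠ 0 := by
    intro h; have := congrArg Fin.val h; rw [hv1] at this; simp at this
  have h20 : (Fin.ofNat (k + l + 1) (k + 1)) ≠ 0 := by
    intro h; have := congrArg Fin.val h; rw [hv2] at this; simp at this
  have hr1 : ∀ c, relp k A (1 : Fin (k + l + 1)) c y ↔ A c y := by
    intro c; unfold relp; rw [hv1]
    exact ⟨fun h => h.1 (by omega), fun h => ⟨fun _ => h, fun h' => absurd (by omega) h'⟩⟩
  have hr2 : ∀ c, relp k A (Fin.ofNat (k + l + 1) (k + 1)) c y ↔ A y c := by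
    intro c; unfold relp; rw [hv2]
    exact ⟨fun h => h.2 (by omega), fun h => ⟨fun h' => absurd h' (by omega), fun _ => h⟩⟩
  have hm1 : mult k l (1 : Fin (k + l + 1)) = k := by
    unfold mult; rw [if_pos (by rw [hv1]; omega)]
  have hm2 : mult k l (Fin.ofNat (k + l + 1) (k + 1)) = l := by
    unfold mult; rw [if_neg (by rw [hv2]; omega)]
  have b0 := center_bound k l hl hlk A hopp X y B E hBy.le hE
  have b1 := leaf_bound k l hl hlk hk2 A hopp X y B C E hB hC hE 1 h10
  have b2 := leaf_bound k l hl hlk hk2 A hopp X y B C E hB hC hE _ h20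
  simp only [hr1, hm1] at b1
  simp only [hr2, hm2] at b2
  have oX := outin_card A hopp X y
  have oY := outin_card A hopp Xᶜ y
  have oX' : ((X.filter fun v => A y v).card : ℝ) + ((X.filter fun v => A v y).card : ℝ)
      = ((X.filter fun v => A y v ∨ A v y).card : ℝ) := by exact_mod_cast oX
  have oY' : ((Xᶜ.filter fun v => A y v).card : ℝ) + ((Xᶜ.filter fun v => A v y).card : ℝ)
      = B := by rw [← hBy]; exact_mod_cast oY
  have hXs : ((X.filter fun v => A y v ∨ A v y).card : ℝ) +
      ((X.filter fun v => ¬ (A y v ∨ A v y)).card : ℝ) = (X.card : ℝ) := by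
    exact_mod_cast Finset.card_filter_add_card_filter_not (s := X) (fun v => A y v ∨ A v y)
  have hcond : ∀ z, sCond k l A z y * n ^ (k + l) =
      ((Finset.univ.filter fun φ => IsStarEmb k l A φ ∧ φ z = y).card : ℝ) := by
    intro z
    unfold sCond
    rw [div_mul_cancel₀ _ (pow_pos hn0 _).ne', Nat.card_eq_fintype_card, Fintype.card_subtype]
  have hT : ((k : ℝ) + l + 1) * sVert k l A y * n ^ (k + l) =
      sCond k l A 0 y * n ^ (k + l)
      + l * (sCond k l A (Fin.ofNat (k + l + 1) (k + 1)) y * n ^ (k + l))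
      + k * (sCond k l A 1 y * n ^ (k + l)) := by
    unfold sVert
    have : (0 : ℝ) < (k : ℝ) + l + 1 := by positivity
    rw [mul_div_cancel₀ _ this.ne']
    ring
  rw [hcond, hcond, hcond] at hT
  have hS' : Smin k l A * n ^ (k + l) ≤ ((k : ℝ) + l + 1) * sVert k l A y * n ^ (k + l) := by
    gcongr
  rw [hT] at hS'
  have hM0 := Mco_nonneg k l hl
  generalize ((Finset.univ.filter fun φ => IsStarEmb k l A φ ∧ φ 0 = y).card : ℝ) = N0 at b0 hS'
  generalize ((Finset.univ.filter fun φ => IsStarEmb k l A φ ∧ φ 1 = y).card : ℝ) = N1 at b1 hS'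
  generalize ((Finset.univ.filter fun φ => IsStarEmb k l A φ ∧
    φ (Fin.ofNat (k + l + 1) (k + 1)) = y).card : ℝ) = N2 at b2 hS'
  have hp1 : (0 : ℝ) ≤ ((X.filter fun v => A y v ∨ A v y).card : ℝ) := by positivity
  have hp2 : (0 : ℝ) ≤ ((X.filter fun v => ¬ (A y v ∨ A v y)).card : ℝ) := by positivity
  generalize ((X.filter fun v => A y v ∨ A v y).card : ℝ) = x1 at *
  generalize ((X.filter fun v => ¬ (A y v ∨ A v y)).card : ℝ) = x2 at *
  generalize ((X.filter fun v => A y v).card : ℝ) = xo at *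
  generalize ((X.filter fun v => A v y).card : ℝ) = xi at *
  generalize ((Xᶜ.filter fun v => A y v).card : ℝ) = yo at *
  generalize ((Xᶜ.filter fun v => A v y).card : ℝ) = yi at *
  generalize (X.card : ℝ) = x at *
  have hB0 : 0 ≤ B := by rw [← hBy]; positivity
  -- combined bound
  have hBm : B ^ (k + l) = B * B ^ (k + l - 1) := by
    rw [← pow_succ']; congr 1; omega
  have hnm1 : n ^ (k + l) = n * n ^ (k + l - 1) := by
    rw [← pow_succ']; congr 1; omega
  have hnm2 : n ^ (k + l) = n * n * n ^ (k + l - 2) := by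
    rw [mul_assoc, ← pow_succ', ← pow_succ']; congr 1; omega
  set P := (lam0 k l + lam1 k l) * B ^ (k + l) with hP
  set Q := lam1 k l * (C ^ (k + l - 1) + E ^ (k + l - 1)) with hQ
  set K := Mco k l * E ^ (k + l - 2) with hK
  have hK0 : 0 ≤ K := by positivity
  have htot : Smin k l A * n ^ (k + l) ≤ P + x1 * Q + (x1 + B) * x2 * K := by
    refine hS'.trans ?_
    have e : P + x1 * Q + (x1 + B) * x2 * K =
      (lam0 k l * B ^ (k + l) + x1 * (lam1 k l * E ^ (k + l - 1))) +
      (xo * (lam1 k l * C ^ (k + l - 1)) + yo * (lam1 k l * B ^ (k + l - 1)) + (xo + yo) * (x2 * K)) +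
      (xi * (lam1 k l * C ^ (k + l - 1)) + yi * (lam1 k l * B ^ (k + l - 1)) + (xi + yi) * (x2 * K)) := by
      rw [hP, hQ, hBm, ← oX']
      nth_rewrite 2 [add_mul]
      rw [← oY']
      ring
    rw [e]
    linarith
  have hle : (x1 + B) * x2 * K ≤ x2 * ((x + B) * K) := by
    have : (x1 + B) * x2 * K = x2 * ((x1 + B) * K) := by ring
    rw [this]
    gcongr
    linarith
  have hi : (lam1 k l * α * ((1 - α - β) ^ (k + l - 1) + (1 - D) ^ (k + l - 1))
        + (lam0 k l + lam1 k l) * β ^ (k + l)) * n ^ (k + l) = P + x * Q := by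
    rw [hP, hQ, hBdef, hCdef, hEdef, ← hα, mul_pow, mul_pow, mul_pow, hnm1]
    ring
  have hii : ((lam0 k l + lam1 k l) * β ^ (k + l)
        + (((k : ℝ) + l) * ((k : ℝ) + l - 1) / (Nat.choose (k + l) k : ℝ))
          * α * (α + β) * (1 - D) ^ (k + l - 2)) * n ^ (k + l) = P + x * ((x + B) * K) := by
    rw [hP, hK, hBdef, hEdef, ← hα, mul_pow, mul_pow, add_mul, mul_assoc]
    congr 1
    rw [hnm2, Mco]
    ring
  have hnp : 0 < n ^ (k + l) := pow_pos hn0 _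
  by_contra hcon
  push Not at hcon
  obtain ⟨c1, c2⟩ := hcon
  have c1' := mul_lt_mul_of_pos_right c1 hnp
  have c2' := mul_lt_mul_of_pos_right c2 hnp
  rw [hi] at c1'
  rw [hii] at c2'
  have hpos : 0 < x1 * (Smin k l A * n ^ (k + l) - (P + x * Q)) +
      x2 * (Smin k l A * n ^ (k + l) - (P + x * ((x + B) * K))) := by
    rcases hp1.eq_or_lt with h | h
    · have : 0 < x2 := by linarith
      exact add_pos_of_nonneg_of_pos (mul_nonneg hp1 (by linarith)) (mul_pos this (by linarith))
    · exact add_pos_of_pos_of_nonneg (mul_pos h (by linarith)) (mul_nonneg hp2 (by linarith))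
  have hfin : x * (Smin k l A * n ^ (k + l)) ≤ x * (P + x1 * Q + x2 * ((x + B) * K)) := by
    gcongr
    linarith
  have e1 : x1 * (Smin k l A * n ^ (k + l) - (P + x * Q)) +
      x2 * (Smin k l A * n ^ (k + l) - (P + x * ((x + B) * K)))
      = x * (Smin k l A * n ^ (k + l)) - x * (P + x1 * Q + x2 * ((x + B) * K)) := by
    have hx2 : x2 = x - x1 := by linarith
    rw [hx2]; ring
  linarith
end

section
/- Suppose s(v) ≥ OPT(k,l) for every vertex v of G, and suppose X ≠ ∅. Then γ ≥ α/2, where γ = min_{x ∈ X} ρ⁻_Y(x) and α = μ(X). -/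
open scoped BigOperators

lemma amgm (s t : ℕ) (a b c : ℝ) (ha : 0 ≤ a) (hb : 0 ≤ b) (hab : a + b ≤ c) :
    a ^ s * b ^ t ≤ ((s:ℝ) ^ s * (t:ℝ) ^ t / ((s:ℝ) + t) ^ (s + t)) * c ^ (s + t) := by
  have hc : 0 ≤ c := by linarith
  rcases Nat.eq_zero_or_pos s with rfl | hs
  · rcases Nat.eq_zero_or_pos t with rfl | ht
    · simp
    · have : (0:ℝ) < t := by exact_mod_cast ht
      simp only [pow_zero, one_mul, Nat.cast_zero, zero_add]
      rw [div_self (by positivity), one_mul]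
      exact pow_le_pow_left₀ hb (by linarith) _
  rcases Nat.eq_zero_or_pos t with rfl | ht
  · have : (0:ℝ) < s := by exact_mod_cast hs
    simp only [pow_zero, mul_one, Nat.cast_zero, add_zero]
    rw [div_self (by positivity), one_mul]
    exact pow_le_pow_left₀ ha (by linarith) _
  have hs' : (0:ℝ) < s := by exact_mod_cast hs
  have ht' : (0:ℝ) < t := by exact_mod_cast ht
  have h := Real.geom_mean_le_arith_mean2_weighted (w₁ := (s:ℝ)/(s+t)) (w₂ := (t:ℝ)/(s+t))
    (p₁ := a / s) (p₂ := b / t) (by positivity) (by positivity) (by positivity) (by positivity)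
    (by field_simp)
  have h2 : (s:ℝ)/(s+t) * (a/s) + (t:ℝ)/(s+t) * (b/t) ≤ c / (s+t) := by
    have : (s:ℝ)/(s+t) * (a/s) + (t:ℝ)/(s+t) * (b/t) = (a+b)/(s+t) := by field_simp
    rw [this]; gcongr
  have h3 := pow_le_pow_left₀ (by positivity) (h.trans h2) (s+t)
  have e1 : ((a / s) ^ ((s:ℝ)/(s+t)) * (b / t) ^ ((t:ℝ)/(s+t))) ^ (s+t) = (a/s)^s * (b/t)^t := by
    rw [mul_pow, ← Real.rpow_natCast, ← Real.rpow_natCast, ← Real.rpow_mul (by positivity),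
      ← Real.rpow_mul (by positivity)]
    have e2 : (s:ℝ)/(s+t) * ((s+t : ℕ):ℝ) = s := by push_cast; field_simp
    have e3 : (t:ℝ)/(s+t) * ((s+t : ℕ):ℝ) = t := by push_cast; field_simp
    rw [e2, e3, Real.rpow_natCast, Real.rpow_natCast]
  rw [e1, div_pow, div_pow, div_pow] at h3
  have h4 := mul_le_mul_of_nonneg_left h3 (show (0:ℝ) ≤ (s:ℝ)^s * (t:ℝ)^t by positivity)
  calc a ^ s * b ^ t = (s:ℝ)^s * (t:ℝ)^t * (a ^ s / s ^ s * (b ^ t / t ^ t)) := by field_simp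
    _ ≤ _ := h4
    _ = _ := by ring

/-- Bernoulli: `2 (t-1)^(t-1) ≤ t^(t-1)`. -/
lemma bern (t : ℕ) (ht : 2 ≤ t) : 2 * ((t:ℝ) - 1) ^ (t - 1) ≤ (t:ℝ) ^ (t - 1) := by
  obtain ⟨u, rfl⟩ : ∃ u, t = u + 1 := ⟨t - 1, by omega⟩
  have hu : (0:ℝ) < u := by exact_mod_cast (by omega : 0 < u)
  have h := one_add_mul_le_pow (a := 1 / (u:ℝ)) (by have : 0 < 1/(u:ℝ) := by positivity
                                                    linarith) u
  have e : (1:ℝ) + u * (1 / u) = 2 := by field_simp; norm_num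
  rw [e] at h
  simp only [Nat.add_sub_cancel]
  push_cast
  have e2 : (u:ℝ) + 1 = (1 + 1/u) * u := by field_simp
  rw [add_sub_cancel_right]
  rw [e2, mul_pow]
  exact mul_le_mul_of_nonneg_right h (by positivity)

lemma E_low (m : ℕ) (hm : 1 ≤ m) : (0.3678:ℝ) ≤ ((m:ℝ) / (m + 1)) ^ m := by
  have hm' : (0:ℝ) < m := by exact_mod_cast hm
  have h1 : (1 + 1 / (m:ℝ)) ^ m ≤ Real.exp 1 := by
    have := Real.add_one_le_exp (1/(m:ℝ))
    calc (1 + 1 / (m:ℝ)) ^ m ≤ (Real.exp (1/(m:ℝ)))^m := by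
          apply pow_le_pow_left₀ (by positivity); linarith
      _ = Real.exp 1 := by rw [← Real.exp_nat_mul]; congr 1; field_simp
  have e : ((m:ℝ) / (m + 1)) ^ m = ((1 + 1 / (m:ℝ)) ^ m)⁻¹ := by
    rw [← inv_pow]; congr 1; field_simp
  rw [e, le_inv_comm₀ (by norm_num) (by positivity)]
  have := Real.exp_one_lt_d9
  refine h1.trans (this.le.trans ?_)
  norm_num

/-- `θ(m) = m^m / ((m-1)^(m-1) 2^(m-1))` -/
lemma theta7 (m : ℕ) (hm : 7 ≤ m) :
    (m:ℝ) ^ m / ((m:ℝ) - 1) ^ (m - 1) * (1/2) ^ (m - 1) ≤ 0.276 := by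
  rcases Nat.eq_or_lt_of_le hm with rfl | h8
  · norm_num
  obtain ⟨u, rfl⟩ : ∃ u, m = u + 1 := ⟨m - 1, by omega⟩
  have hu7 : 7 ≤ u := by omega
  have hu : (0:ℝ) < u := by exact_mod_cast (by omega : 0 < u)
  simp only [Nat.add_sub_cancel]
  push_cast
  rw [add_sub_cancel_right]
  have h1 : (1 + 1 / (u:ℝ)) ^ u ≤ 2.7182818286 := by
    have := Real.add_one_le_exp (1/(u:ℝ))
    calc (1 + 1 / (u:ℝ)) ^ u ≤ (Real.exp (1/(u:ℝ)))^u := by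
          apply pow_le_pow_left₀ (by positivity); linarith
      _ = Real.exp 1 := by rw [← Real.exp_nat_mul]; congr 1; field_simp
      _ ≤ _ := Real.exp_one_lt_d9.le
  have h2 : ∀ v : ℕ, 7 ≤ v → ((v:ℝ)+1) * (1/2)^v ≤ 8/128 := by
    intro v hv
    induction v, hv using Nat.le_induction with
    | base => norm_num
    | succ n hn ih =>
      have : (7:ℝ) ≤ n := by exact_mod_cast hn
      push_cast
      rw [pow_succ]
      have hp : (0:ℝ) < (1/2)^n := by positivity
      nlinarith
  have e : ((u:ℝ)+1)^(u+1) / (u:ℝ)^u * (1/2)^u = (1+1/(u:ℝ))^u * (((u:ℝ)+1)*(1/2)^u) := by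
    have : (1+1/(u:ℝ)) = ((u:ℝ)+1)/u := by field_simp
    rw [this, div_pow ((u:ℝ)+1), pow_succ]; field_simp
  rw [e]
  calc _ ≤ (2.7182818286:ℝ) * (8/128) := by
        apply mul_le_mul h1 (h2 u hu7) (by positivity) (by norm_num)
    _ ≤ _ := by norm_num

/-- Case `l ≥ 2`, normalised. -/
lemma fin2 (m : ℕ) (hm : 6 ≤ m) (E θ u κ α r : ℝ) (hE : 0.3678 ≤ E)
    (hθ0 : 0 ≤ θ) (hθ6 : θ ≤ 0.4666) (hθ7 : 7 ≤ m → θ ≤ 0.276) (hα0 : 0 ≤ α) (hα1 : α ≤ 1)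
    (hr1 : r ≤ 1) (hr : 1/2 ≤ r)
    (H1 : E ≤ u + θ * (2 * (1 - r)) ^ (m - 1) * (r / 2))
    (H3 : u ≤ κ + θ * (α / 2)) (k1 : κ ≤ 1/9) (k2 : κ ≤ (1 - α) ^ m) : False := by
  have hL : (2 * (1 - r)) ^ (m - 1) * (r/2) ≤ 1/4 := by
    have : (2 * (1 - r)) ^ (m - 1) ≤ 2 * (1 - r) :=
      pow_le_of_le_one (by linarith) (by linarith) (by omega)
    nlinarith [sq_nonneg (r - 1/2)]
  have hL2 : θ * (2 * (1 - r)) ^ (m - 1) * (r / 2) ≤ θ * (1/4) := by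
    rw [mul_assoc]; exact mul_le_mul_of_nonneg_left hL hθ0
  by_cases h7 : 7 ≤ m
  · have := hθ7 h7
    nlinarith
  by_cases ha : α ≤ 1/2
  · nlinarith
  · have : (1 - α) ^ m ≤ (1/2)^6 := by
      calc (1 - α) ^ m ≤ (1/2)^m := pow_le_pow_left₀ (by linarith) (by linarith) _
        _ ≤ _ := pow_le_pow_of_le_one (by norm_num) (by norm_num) hm
    norm_num at this
    nlinarith

lemma powb (m j : ℕ) (hm : j ≤ m) (x c : ℝ) (h0 : 0 ≤ x) (hx : x ≤ c) (hc : c ≤ 1) :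
    x ^ m ≤ c ^ j :=
  (pow_le_pow_left₀ h0 hx m).trans (pow_le_pow_of_le_one (h0.trans hx) hc hm)

/-- Case `l = 1`, normalised. -/
lemma fin1 (m : ℕ) (hm : 6 ≤ m) (E θ u κ α r p w : ℝ) (hE : 0.3678 ≤ E)
    (hE6 : m = 6 → 0.3965 ≤ E)
    (hθ0 : 0 ≤ θ) (hθ6 : θ ≤ 0.4666) (hθ7 : 7 ≤ m → θ ≤ 0.276) (hα0 : 0 ≤ α) (hα1 : α ≤ 1)
    (hr1 : r ≤ 1) (hr : 1/2 ≤ r)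
    (H1 : E ≤ u + θ * (2 * (1 - r)) ^ (m - 1) * r)
    (H2 : u ≤ r ^ m)
    (H3 : u ≤ κ + θ * w) (hw : w ≤ α) (hw2 : 1/2 ≤ p → w ≤ α / 2 + 1 / 4)
    (H4 : p ≤ 1/2 → u ≤ θ / 2)
    (hκ : ∀ s : ℝ, 0 ≤ s → s ≤ 2 → κ ≤ (1 - α + s * α / 2) ^ m / (1 + s)) : False := by
  by_cases r1 : r ≤ 0.7
  · have hL : (2 * (1 - r)) ^ (m - 1) * r ≤ 1/2 := by
      have : (2 * (1 - r)) ^ (m - 1) ≤ 2 * (1 - r) :=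
        pow_le_of_le_one (by linarith) (by linarith) (by omega)
      nlinarith [sq_nonneg (r - 1/2)]
    have hL2 : θ * (2 * (1 - r)) ^ (m - 1) * r ≤ θ * (1/2) := by
      rw [mul_assoc]; exact mul_le_mul_of_nonneg_left hL hθ0
    have := powb m 6 hm r 0.7 (by linarith) r1 (by norm_num)
    norm_num at this
    linarith
  by_cases r2 : r ≤ 0.83
  · have h1 := powb (m-1) 5 (by omega) (2 * (1 - r)) 0.6 (by linarith) (by linarith) (by norm_num)
    have hL : (2 * (1 - r)) ^ (m - 1) * r ≤ 0.6^5 * 1 :=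
      mul_le_mul h1 hr1 (by linarith) (by norm_num)
    have hL2 : θ * (2 * (1 - r)) ^ (m - 1) * r ≤ 0.4666 * (0.6^5 * 1) := by
      rw [mul_assoc]
      exact mul_le_mul hθ6 hL (mul_nonneg (pow_nonneg (by linarith) _) (by linarith)) (by norm_num)
    have := powb m 6 hm r 0.83 (by linarith) r2 (by norm_num)
    norm_num at this hL2
    linarith
  have h1 := powb (m-1) 5 (by omega) (2 * (1 - r)) 0.34 (by linarith) (by linarith) (by norm_num)
  have hL : (2 * (1 - r)) ^ (m - 1) * r ≤ 0.34^5 * 1 :=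
    mul_le_mul h1 hr1 (by linarith) (by norm_num)
  have hL2 : θ * (2 * (1 - r)) ^ (m - 1) * r ≤ θ * 0.00455 := by
    rw [mul_assoc]
    refine mul_le_mul_of_nonneg_left (hL.trans (by norm_num)) hθ0
  have hθw : θ * w ≤ θ * α := mul_le_mul_of_nonneg_left hw hθ0
  have k2 := hκ 2 (by norm_num) (by norm_num)
  have k1 := hκ 1 (by norm_num) (by norm_num)
  have k0 := hκ 0 (by norm_num) (by norm_num)
  rw [show 1 - α + 2 * α / 2 = 1 by ring, one_pow] at k2
  rw [show 1 - α + 1 * α / 2 = 1 - α / 2 by ring] at k1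
  rw [show 1 - α + 0 * α / 2 = 1 - α by ring] at k0
  by_cases h7 : 7 ≤ m
  · have ht := hθ7 h7
    have hta : θ * α ≤ 0.276 * α := mul_le_mul_of_nonneg_right ht hα0
    by_cases a1 : α ≤ 0.115
    · linarith
    by_cases a2 : α ≤ 0.13
    · have := powb m 7 h7 (1 - α/2) 0.9425 (by linarith) (by linarith) (by norm_num)
      norm_num at this
      linarith
    by_cases a3 : α ≤ 0.16
    · have := powb m 7 h7 (1 - α/2) 0.935 (by linarith) (by linarith) (by norm_num)
      norm_num at this
      linarith
    by_cases a4 : α ≤ 0.25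
    · have := powb m 7 h7 (1 - α/2) 0.92 (by linarith) (by linarith) (by norm_num)
      norm_num at this
      linarith
    by_cases a5 : α ≤ 0.7
    · have := powb m 7 h7 (1 - α) 0.75 (by linarith) (by linarith) (by norm_num)
      norm_num at this
      linarith
    have := powb m 7 h7 (1 - α) 0.3 (by linarith) (by linarith) (by norm_num)
    norm_num at this
    linarith
  have hm6 : m = 6 := by omega
  have hE' := hE6 hm6
  by_cases hp : p ≤ 1/2
  · linarith [H4 hp]
  have hw3 := hw2 (by linarith)
  have hta : θ * α ≤ 0.4666 * α := mul_le_mul_of_nonneg_right hθ6 hα0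
  by_cases a1 : α ≤ 1/9
  · linarith
  by_cases a2 : α ≤ 0.17
  · have k := hκ 1.6 (by norm_num) (by norm_num)
    rw [show 1 - α + 1.6 * α / 2 = 1 - 0.2 * α by ring, hm6] at k
    have : (1 - 0.2 * α)^6 ≤ 1 - 1.2 * α + 0.6 * α^2 := by
      have h3 : (1 - 0.2*α)^6 = 1 - 1.2 * α + 0.6 * α^2 - α^3 * (0.16 - 0.024 * α)
          - α^5 * (0.00192 - 0.000064 * α) := by ring
      have : 0 ≤ α^3 * (0.16 - 0.024 * α) := mul_nonneg (by positivity) (by linarith)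
      have : 0 ≤ α^5 * (0.00192 - 0.000064 * α) := mul_nonneg (by positivity) (by linarith)
      linarith
    norm_num at k
    nlinarith
  by_cases a3 : α ≤ 0.21
  · have := powb m 6 hm (1 - α/2) 0.915 (by linarith) (by linarith) (by norm_num)
    norm_num at this
    linarith
  by_cases a4 : α ≤ 0.25
  · have := powb m 6 hm (1 - α/2) 0.895 (by linarith) (by linarith) (by norm_num)
    norm_num at this
    linarith
  by_cases a5 : α ≤ 0.375
  · have := powb m 6 hm (1 - α) 0.75 (by linarith) (by linarith) (by norm_num)
    norm_num at this
    linarith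
  by_cases a6 : α ≤ 0.5
  · have := powb m 6 hm (1 - α) 0.625 (by linarith) (by linarith) (by norm_num)
    norm_num at this
    linarith
  have := powb m 6 hm (1 - α) 0.5 (by linarith) (by linarith) (by norm_num)
  norm_num at this
  have h5 : θ * w ≤ 0.4666 * 0.75 :=
    (mul_le_mul_of_nonneg_left (by linarith : w ≤ 0.75) hθ0).trans (by linarith)
  linarith

lemma lamO_le (k l : ℕ) (hk : 2 ≤ k) (hl : 1 ≤ l) :
    (k:ℝ) * (((k:ℝ) - 1) ^ (k - 1) * (l:ℝ) ^ l / ((k:ℝ) + l - 1) ^ (k + l - 1))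
      ≤ (k:ℝ) ^ k * (l:ℝ) ^ l / ((k:ℝ) + l - 1) ^ (k + l - 1) / 2 := by
  have h := bern k hk
  have hk' : (2:ℝ) ≤ k := by exact_mod_cast hk
  have hl' : (1:ℝ) ≤ l := by exact_mod_cast hl
  have e : (k:ℝ) ^ k = k * (k:ℝ)^(k-1) := by
    rw [← pow_succ']; congr 1; omega
  rw [e]
  have hD : (0:ℝ) < ((k:ℝ) + l - 1) ^ (k + l - 1) := pow_pos (by linarith) _
  have : (k:ℝ) * (((k:ℝ) - 1) ^ (k - 1)) * (l:ℝ)^l ≤ k * (k:ℝ)^(k-1) * (l:ℝ)^l / 2 := by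
    have h3 : (k:ℝ) * (((k:ℝ) - 1) ^ (k - 1)) ≤ k * (k:ℝ)^(k-1) / 2 := by
      rw [mul_div_assoc]; apply mul_le_mul_of_nonneg_left _ (by linarith); linarith
    calc _ ≤ k * (k:ℝ)^(k-1) / 2 * (l:ℝ)^l := mul_le_mul_of_nonneg_right h3 (by positivity)
      _ = _ := by ring
  calc _ = (k:ℝ) * (((k:ℝ) - 1) ^ (k - 1)) * (l:ℝ)^l / ((k:ℝ) + l - 1) ^ (k + l - 1) := by ring
    _ ≤ k * (k:ℝ)^(k-1) * (l:ℝ)^l / 2 / ((k:ℝ) + l - 1) ^ (k + l - 1) := by gcongr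
    _ = _ := by ring

lemma lamI_le2 (k l : ℕ) (hk : 1 ≤ k) (hl : 2 ≤ l) :
    (l:ℝ) * ((k:ℝ) ^ k * ((l:ℝ) - 1) ^ (l - 1) / ((k:ℝ) + l - 1) ^ (k + l - 1))
      ≤ (k:ℝ) ^ k * (l:ℝ) ^ l / ((k:ℝ) + l - 1) ^ (k + l - 1) / 2 := by
  have h := lamO_le l k hl hk
  rw [add_comm l k, add_comm (l:ℝ) (k:ℝ), mul_comm ((l:ℝ)^l), mul_comm (((l:ℝ)-1)^(l-1))] at h
  exact h

lemma halfb (k : ℕ) (hk : 1 ≤ k) (p q : ℝ) (hp0 : 0 ≤ p) (hq0 : 0 ≤ q) (hph : p ≤ 1/2)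
    (hpq : p + q ≤ 1) : p ^ k * q ≤ (1/2)^(k+1) := by
  obtain ⟨u, rfl⟩ : ∃ u, k = u + 1 := ⟨k - 1, by omega⟩
  have h5 : p ^ u ≤ (1/2)^u := pow_le_pow_left₀ hp0 hph _
  calc p ^ (u + 1) * q = p ^ u * (p * q) := by ring
    _ ≤ (1/2)^u * (1/4) := by
        apply mul_le_mul h5 _ (by positivity) (by positivity)
        nlinarith [sq_nonneg (p - q)]
    _ = (1/2)^(u+1+1) := by ring

set_option maxHeartbeats 2000000 in
lemma final (k l : ℕ) (hl : 1 ≤ l) (hlk : l ≤ k) (hm : 6 ≤ k + l)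
    (pX pY qX qY α C : ℝ) (hpX : 0 ≤ pX) (hpY : 0 ≤ pY) (hqX : 0 ≤ qX) (hqY : 0 ≤ qY)
    (hα : pX + qX ≤ α) (hα' : pY + qY ≤ 1 - α) (hq : qY ≤ α / 2)
    (hr : 1 / 2 ≤ (pX + pY) + (qX + qY))
    (H0 : ((k : ℝ) ^ k * (l : ℝ) ^ l / ((k : ℝ) + l) ^ (k + l)) *
        (((k:ℝ) + l) / ((k:ℝ) + l + 1)) ^ (k + l) ≤ C
      + l * ((pX + pY) * ((k:ℝ) ^ k * ((l:ℝ) - 1) ^ (l - 1) / ((k:ℝ) + l - 1) ^ (k + l - 1)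
          * (1 - ((pX + pY) + (qX + qY))) ^ (k + l - 1)))
      + k * ((qX + qY) * (((k:ℝ) - 1) ^ (k - 1) * (l:ℝ) ^ l / ((k:ℝ) + l - 1) ^ (k + l - 1)
          * (1 - ((pX + pY) + (qX + qY))) ^ (k + l - 1))))
    (Hc : C ≤ (pX + pY) ^ k * (qX + qY) ^ l)
    (Hx : C ≤ pY ^ k * qY ^ l
      + l * (qX * ((k:ℝ) ^ k * ((l:ℝ) - 1) ^ (l - 1) / ((k:ℝ) + l - 1) ^ (k + l - 1)
          * (1/2) ^ (k + l - 1)))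
      + k * (pX * (((k:ℝ) - 1) ^ (k - 1) * (l:ℝ) ^ l / ((k:ℝ) + l - 1) ^ (k + l - 1)
          * (1/2) ^ (k + l - 1)))) : False := by
  have hk2 : 2 ≤ k := by omega
  have hk' : (2:ℝ) ≤ k := by exact_mod_cast hk2
  have hl' : (1:ℝ) ≤ l := by exact_mod_cast hl
  have hO := lamO_le k l hk2 hl
  set lo : ℝ := ((k:ℝ) - 1) ^ (k - 1) * (l:ℝ) ^ l / ((k:ℝ) + l - 1) ^ (k + l - 1) with hlo
  set li : ℝ := (k:ℝ) ^ k * ((l:ℝ) - 1) ^ (l - 1) / ((k:ℝ) + l - 1) ^ (k + l - 1) with hli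
  set M : ℝ := (k:ℝ) ^ k * (l:ℝ) ^ l / ((k:ℝ) + l - 1) ^ (k + l - 1) with hM
  set L0 : ℝ := (k : ℝ) ^ k * (l : ℝ) ^ l / ((k : ℝ) + l) ^ (k + l) with hL0
  set E : ℝ := (((k:ℝ) + l) / ((k:ℝ) + l + 1)) ^ (k + l) with hEd
  set p := pX + pY with hp
  set q := qX + qY with hqd
  set r := p + q with hrd
  have hpos : 0 < L0 := by positivity
  have hp0 : 0 ≤ p := by positivity
  have hq0 : 0 ≤ q := by positivity
  have hr1 : r ≤ 1 := by linarith
  have hα0 : 0 ≤ α := by linarith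
  have hα1 : α ≤ 1 := by linarith
  set g : ℝ := ((k + l : ℕ):ℝ) ^ (k + l) / (((k + l : ℕ):ℝ) - 1) ^ (k + l - 1) with hg
  have hD : (0:ℝ) < ((k:ℝ) + l - 1) ^ (k + l - 1) := pow_pos (by linarith) _
  have hMg : M = L0 * g := by
    rw [hM, hL0, hg]; push_cast; field_simp
  have hg0 : 0 ≤ g := by
    rw [hg]; push_cast; positivity
  set θ := g * (1/2) ^ (k + l - 1) with hθ
  have hθ0 : 0 ≤ θ := by positivity
  have hθ7 : 7 ≤ k + l → θ ≤ 0.276 := fun h => theta7 (k + l) h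
  have hθ6 : θ ≤ 0.4666 := by
    by_cases h7 : 7 ≤ k + l
    · linarith [hθ7 h7]
    · have h6 : k + l = 6 := by omega
      rw [hθ, hg, h6]; norm_num
  have hE : 0.3678 ≤ E := by
    have := E_low (k + l) (by omega)
    rw [hEd]; push_cast at this; exact this
  have hE6 : k + l = 6 → 0.3965 ≤ E := by
    intro h6
    have h6' : (k:ℝ) + l = 6 := by exact_mod_cast h6
    rw [hEd, h6', h6]; norm_num
  have hgθ : g * (1 - r) ^ (k + l - 1) = θ * (2 * (1 - r)) ^ (k + l - 1) := by
    rw [hθ, mul_pow, mul_assoc, ← mul_assoc ((1/2:ℝ)^(k+l-1)), ← mul_pow]; norm_num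
  have hrp : 0 ≤ (1 - r) ^ (k + l - 1) := pow_nonneg (by linarith) _
  have hhp : (0:ℝ) ≤ (1/2) ^ (k + l - 1) := by positivity
  -- general consequences with a parameter F
  have key : ∀ F : ℝ, 1/2 ≤ F → l * li ≤ F * M →
      E ≤ C / L0 + θ * (2 * (1 - r)) ^ (k + l - 1) * (r * F) ∧
      C / L0 ≤ pY ^ k * qY ^ l / L0 + θ * (F * qX + pX / 2) := by
    intro F hF hI
    constructor
    · have h1 : l * (p * (li * (1 - r) ^ (k + l - 1))) ≤ F * M * (p * (1 - r) ^ (k + l - 1)) := by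
        calc _ = l * li * (p * (1 - r) ^ (k + l - 1)) := by ring
          _ ≤ _ := mul_le_mul_of_nonneg_right hI (by positivity)
      have hM0 : 0 ≤ M := by rw [hMg]; positivity
      have h2 : k * (q * (lo * (1 - r) ^ (k + l - 1))) ≤ F * M * (q * (1 - r) ^ (k + l - 1)) := by
        calc _ = k * lo * (q * (1 - r) ^ (k + l - 1)) := by ring
          _ ≤ _ := mul_le_mul_of_nonneg_right (hO.trans (by nlinarith)) (by positivity)
      have h3 : L0 * E ≤ L0 * (C / L0 + g * (1 - r) ^ (k + l - 1) * (r * F)) := by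
        calc L0 * E ≤ _ := H0
          _ ≤ C + F * M * (p * (1 - r) ^ (k + l - 1)) + F * M * (q * (1 - r) ^ (k + l - 1)) := by
              linarith
          _ = _ := by rw [hMg, hrd]; field_simp; ring
      rw [hgθ] at h3
      exact le_of_mul_le_mul_left h3 hpos
    · have h1 : l * (qX * (li * (1/2) ^ (k + l - 1))) ≤ F * M * (qX * (1/2) ^ (k + l - 1)) := by
        calc _ = l * li * (qX * (1/2) ^ (k + l - 1)) := by ring
          _ ≤ _ := mul_le_mul_of_nonneg_right hI (by positivity)
      have h2 : k * (pX * (lo * (1/2) ^ (k + l - 1))) ≤ M / 2 * (pX * (1/2) ^ (k + l - 1)) := by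
        calc _ = k * lo * (pX * (1/2) ^ (k + l - 1)) := by ring
          _ ≤ _ := mul_le_mul_of_nonneg_right hO (by positivity)
      rw [div_le_iff₀ hpos]
      calc C ≤ _ := Hx
        _ ≤ pY ^ k * qY ^ l + F * M * (qX * (1/2) ^ (k + l - 1))
            + M / 2 * (pX * (1/2) ^ (k + l - 1)) := by linarith
        _ = _ := by rw [hMg, hθ]; field_simp; ring
  have hκ : ∀ s : ℝ, 0 ≤ s → s ≤ 2 →
      pY ^ k * qY ^ l / L0 ≤ (1 - α + s * α / 2) ^ (k + l) / (1 + s) ^ l := by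
    intro s hs hs2
    have h := amgm k l pY ((1 + s) * qY) (1 - α + s * α / 2) hpY (by positivity)
      (by nlinarith)
    rw [div_le_div_iff₀ hpos (by positivity)]
    rw [mul_pow] at h
    calc _ = pY ^ k * ((1 + s) ^ l * qY ^ l) := by ring
      _ ≤ _ := h
      _ = _ := by ring
  have H2 : C / L0 ≤ r ^ (k + l) := by
    rw [div_le_iff₀ hpos]
    have := amgm k l p q r hp0 hq0 le_rfl
    linarith
  rcases Nat.eq_or_lt_of_le hl with h1 | h2
  · have hl1 : l = 1 := h1.symm
    have hI : l * li ≤ 1 * M := by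
      rw [hli, hM, hl1]; simp
    obtain ⟨A1, A2⟩ := key 1 (by norm_num) hI
    rw [mul_one] at A1
    refine fin1 (k + l) hm E θ (C / L0) (pY ^ k * qY ^ l / L0) α r p (1 * qX + pX / 2) hE hE6
      hθ0 hθ6 hθ7 hα0 hα1 hr1 hr A1 H2 A2 (by linarith) (fun h => by linarith) ?_ ?_
    · intro hph
      rw [div_le_iff₀ hpos]
      have e : θ / 2 * L0 = (1/2)^(k+1) := by
        have : θ / 2 * L0 = M * (1/2)^(k+l-1) / 2 := by rw [hMg, hθ]; ring
        rw [this, hM, hl1]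
        simp only [Nat.cast_one, one_pow, mul_one, add_sub_cancel_right, Nat.add_sub_cancel]
        rw [div_self (by positivity), pow_succ]; ring
      rw [e]
      refine Hc.trans ?_
      rw [hl1, pow_one]
      exact halfb k (by omega) p q hp0 hq0 hph (by linarith)
    · intro s hs hs2
      have := hκ s hs hs2
      have e : (1 + s) ^ l = 1 + s := by rw [hl1, pow_one]
      rwa [e] at this
  · have hI := lamI_le2 k l (by omega) h2
    obtain ⟨A1, A2⟩ := key (1/2) (by norm_num) (by linarith)
    have k2 := hκ 2 (by norm_num) (by norm_num)
    have k0 := hκ 0 (by norm_num) (by norm_num)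
    refine fin2 (k + l) hm E θ (C / L0) (pY ^ k * qY ^ l / L0) α r hE
      hθ0 hθ6 hθ7 hα0 hα1 hr1 hr (by convert A1 using 3; ring) (A2.trans ?_) ?_ ?_
    · have : θ * (1/2 * qX + pX / 2) ≤ θ * (α/2) :=
        mul_le_mul_of_nonneg_left (by linarith) hθ0
      linarith
    · refine k2.trans ?_
      rw [show 1 - α + 2 * α / 2 = 1 by ring, one_pow]
      have : (9:ℝ) ≤ (1 + 2)^l := by
        calc (9:ℝ) = (1+2)^2 := by norm_num
          _ ≤ _ := pow_le_pow_right₀ (by norm_num) h2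
      gcongr
    · simpa using k0

section counting
open Classical Finset
variable {V : Type} [Fintype V]

noncomputable def NB (A : V → V → Prop) (w : V) : Finset V := univ.filter fun u => A w u ∨ A u w
noncomputable def NP (A : V → V → Prop) (w : V) : Finset V := univ.filter fun u => A w u
noncomputable def NM (A : V → V → Prop) (w : V) : Finset V := univ.filter fun u => A u w

lemma prod_all (k l : ℕ) (a b : ℕ) :
    (∏ i : Fin (k + l + 1), if i.val = 0 then 1 else if i.val ≤ k then a else b)
      = a ^ k * b ^ l := by
  rw [Fin.prod_univ_succ, Fin.prod_univ_add]
  have h1 : ∀ i : Fin k, i.val + 1 ≤ k := fun i => i.2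
  have h2 : ∀ i : Fin l, ¬ (k + i.val + 1 ≤ k) := fun i => by omega
  simp [h1, h2]

lemma prod_out (k l : ℕ) (a b : ℕ) (j : Fin (k + l + 1)) (hj : 1 ≤ j.val) (hj2 : j.val ≤ k) :
    (∏ i : Fin (k + l + 1), if i.val = 0 then 1 else if i = j then 1 else
      if i.val ≤ k then a else b) = a ^ (k - 1) * b ^ l := by
  have h := Finset.prod_erase_mul univ
    (fun i : Fin (k + l + 1) => if i.val = 0 then 1 else if i = j then 1 else
      if i.val ≤ k then a else b) (mem_univ j)
  have h0 : j.val ≠ 0 := by omega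
  rw [← h]
  simp only [h0, if_false, if_true, mul_one]
  rw [Fin.prod_univ_succ] at h
  clear h
  obtain ⟨j', hj'⟩ : ∃ j' : Fin k, j = Fin.succ (Fin.castAdd l j') :=
    ⟨⟨j.val - 1, by omega⟩, by ext; simp; omega⟩
  have e := Finset.prod_erase univ (a := j)
    (f := fun i : Fin (k + l + 1) => if i.val = 0 then 1 else if i = j then 1 else
      if i.val ≤ k then a else b) (by simp)
  rw [e, Fin.prod_univ_succ, Fin.prod_univ_add]
  have h1 : ∀ i : Fin k, i.val + 1 ≤ k := fun i => i.2
  have h2 : ∀ i : Fin l, ¬ (k + i.val + 1 ≤ k) := fun i => by omega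
  have h3 : ∀ i : Fin l, ¬ (Fin.natAdd k i = Fin.castAdd l j') := fun i hi => by
    have := congrArg Fin.val hi
    simp at this
    omega
  subst hj'
  simp [h1, h2, h3]
  rw [Finset.prod_ite]
  simp [Finset.filter_ne', Finset.card_erase_of_mem]

lemma prod_in (k l : ℕ) (a b : ℕ) (j : Fin (k + l + 1)) (hj : k + 1 ≤ j.val) :
    (∏ i : Fin (k + l + 1), if i.val = 0 then 1 else if i = j then 1 else
      if i.val ≤ k then a else b) = a ^ k * b ^ (l - 1) := by
  obtain ⟨j', hj'⟩ : ∃ j' : Fin l, j = Fin.succ (Fin.natAdd k j') :=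
    ⟨⟨j.val - (k + 1), by omega⟩, by ext; simp; omega⟩
  rw [Fin.prod_univ_succ, Fin.prod_univ_add]
  have h1 : ∀ i : Fin k, i.val + 1 ≤ k := fun i => i.2
  have h2 : ∀ i : Fin l, ¬ (k + i.val + 1 ≤ k) := fun i => by omega
  have h3 : ∀ i : Fin k, ¬ (Fin.castAdd l i = Fin.natAdd k j') := fun i hi => by
    have := congrArg Fin.val hi
    simp at this
    omega
  subst hj'
  simp [h1, h2, h3]
  rw [Finset.prod_ite]
  simp [Finset.filter_ne', Finset.card_erase_of_mem]

/-- the basic inclusion for copies with prescribed center and one prescribed leaf -/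
lemma pair_nat (k l : ℕ) (A : V → V → Prop) (j : Fin (k + l + 1)) (hj : 1 ≤ j.val) (u w : V) :
    (univ.filter fun φ : Fin (k + l + 1) → V => IsStarEmb k l A φ ∧ φ 0 = u ∧ φ j = w).card ≤
      ∏ i : Fin (k + l + 1), if i.val = 0 then 1 else if i = j then 1 else
      if i.val ≤ k then (NP A u \ NB A w).card else (NM A u \ NB A w).card := by
  calc _ ≤ (Fintype.piFinset fun i : Fin (k + l + 1) => if i.val = 0 then {u} else
        if i = j then {w} else
        if i.val ≤ k then (NP A u \ NB A w) else (NM A u \ NB A w)).card := by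
        apply card_le_card
        intro φ hφ
        simp only [mem_filter, mem_univ, true_and] at hφ
        obtain ⟨⟨_, hA⟩, h0, hjw⟩ := hφ
        rw [Fintype.mem_piFinset]
        intro i
        by_cases hi0 : i.val = 0
        · have : i = 0 := Fin.ext hi0
          simp [this, h0]
        by_cases hij : i = j
        · subst hij; simp [hi0, hjw]
        have n1 : ¬ A w (φ i) := by
          rw [← hjw, ← hA]; unfold StarArc; omega
        have n2 : ¬ A (φ i) w := by
          rw [← hjw, ← hA]; unfold StarArc; omega
        have z : (0 : Fin (k + l + 1)).val = 0 := rfl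
        by_cases hik : i.val ≤ k
        · have : A u (φ i) := by
            rw [← h0, ← hA]; unfold StarArc; left; omega
          simp [hi0, hij, hik, NP, NB, this, n1, n2]
        · have : A (φ i) u := by
            rw [← h0, ← hA]; unfold StarArc; right; omega
          simp [hi0, hij, hik, NM, NB, this, n1, n2]
    _ = _ := by
        rw [Fintype.card_piFinset]
        apply prod_congr rfl
        intro i _
        split_ifs <;> simp

lemma ab_le (A : V → V → Prop) (hopp : ∀ u v, A u v → ¬ A v u) (u w : V) :
    ((NP A u \ NB A w).card : ℝ) + (NM A u \ NB A w).card
      ≤ (Fintype.card V : ℝ) - (NB A w).card := by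
  have hd : Disjoint (NP A u \ NB A w) (NM A u \ NB A w) := by
    rw [Finset.disjoint_left]
    intro x hx hy
    simp only [NP, NM, mem_sdiff, mem_filter, mem_univ, true_and] at hx hy
    exact hopp _ _ hx.1 hy.1
  have h : (NP A u \ NB A w).card + (NM A u \ NB A w).card + (NB A w).card ≤ Fintype.card V := by
    rw [← card_union_of_disjoint hd, ← card_union_of_disjoint]
    · exact card_le_univ _
    · rw [Finset.disjoint_left]
      intro x hx hy
      simp only [mem_union, mem_sdiff] at hx
      tauto
  have h' : ((NP A u \ NB A w).card : ℝ) + (NM A u \ NB A w).card + (NB A w).card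
      ≤ Fintype.card V := by exact_mod_cast h
  linarith

lemma pair_out (k l : ℕ) (hk : 1 ≤ k) (A : V → V → Prop) (hopp : ∀ u v, A u v → ¬ A v u)
    (j : Fin (k + l + 1)) (hj : 1 ≤ j.val) (hj2 : j.val ≤ k) (u w : V) :
    ((univ.filter fun φ : Fin (k + l + 1) → V =>
      IsStarEmb k l A φ ∧ φ 0 = u ∧ φ j = w).card : ℝ) ≤
      (((k:ℝ) - 1) ^ (k - 1) * (l:ℝ) ^ l / ((k:ℝ) + l - 1) ^ (k + l - 1)) *
        ((Fintype.card V : ℝ) - (NB A w).card) ^ (k + l - 1) := by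
  have h := pair_nat k l A j hj u w
  rw [prod_out k l _ _ j hj hj2] at h
  have h' : ((univ.filter fun φ : Fin (k + l + 1) → V =>
      IsStarEmb k l A φ ∧ φ 0 = u ∧ φ j = w).card : ℝ) ≤
      ((NP A u \ NB A w).card : ℝ) ^ (k-1) * ((NM A u \ NB A w).card : ℝ) ^ l := by
    exact_mod_cast h
  refine h'.trans ?_
  have := amgm (k-1) l ((NP A u \ NB A w).card : ℝ) ((NM A u \ NB A w).card : ℝ) _
    (by positivity) (by positivity) (ab_le A hopp u w)
  rw [Nat.cast_sub hk, Nat.cast_one, show k - 1 + l = k + l - 1 by omega,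
    show (k:ℝ) - 1 + l = k + l - 1 by ring] at this
  exact this

lemma pair_in (k l : ℕ) (hl : 1 ≤ l) (A : V → V → Prop) (hopp : ∀ u v, A u v → ¬ A v u)
    (j : Fin (k + l + 1)) (hj : k + 1 ≤ j.val) (u w : V) :
    ((univ.filter fun φ : Fin (k + l + 1) → V =>
      IsStarEmb k l A φ ∧ φ 0 = u ∧ φ j = w).card : ℝ) ≤
      ((k:ℝ) ^ k * ((l:ℝ) - 1) ^ (l - 1) / ((k:ℝ) + l - 1) ^ (k + l - 1)) *
        ((Fintype.card V : ℝ) - (NB A w).card) ^ (k + l - 1) := by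
  have h := pair_nat k l A j (by omega) u w
  rw [prod_in k l _ _ j hj] at h
  have h' : ((univ.filter fun φ : Fin (k + l + 1) → V =>
      IsStarEmb k l A φ ∧ φ 0 = u ∧ φ j = w).card : ℝ) ≤
      ((NP A u \ NB A w).card : ℝ) ^ k * ((NM A u \ NB A w).card : ℝ) ^ (l-1) := by
    exact_mod_cast h
  refine h'.trans ?_
  have := amgm k (l-1) ((NP A u \ NB A w).card : ℝ) ((NM A u \ NB A w).card : ℝ) _
    (by positivity) (by positivity) (ab_le A hopp u w)
  rw [Nat.cast_sub hl, Nat.cast_one, show k + (l - 1) = k + l - 1 by omega,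
    show (k:ℝ) + (l - 1) = k + l - 1 by ring] at this
  exact this

/-- copies centered at `x` with all leaves in `B` -/
lemma center_nat (k l : ℕ) (A : V → V → Prop) (x : V) (B : Finset V) :
    (univ.filter fun φ : Fin (k + l + 1) → V => IsStarEmb k l A φ ∧ φ 0 = x ∧
      ∀ j : Fin (k + l + 1), 1 ≤ j.val → φ j ∈ B).card ≤
      (NP A x ∩ B).card ^ k * (NM A x ∩ B).card ^ l := by
  rw [← prod_all]
  calc _ ≤ (Fintype.piFinset fun i : Fin (k + l + 1) => if i.val = 0 then {x} else
        if i.val ≤ k then (NP A x ∩ B) else (NM A x ∩ B)).card := by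
        apply card_le_card
        intro φ hφ
        simp only [mem_filter, mem_univ, true_and] at hφ
        obtain ⟨⟨_, hA⟩, h0, hB⟩ := hφ
        rw [Fintype.mem_piFinset]
        intro i
        by_cases hi0 : i.val = 0
        · have : i = 0 := Fin.ext hi0
          simp [this, h0]
        have hb := hB i (by omega)
        have z : (0 : Fin (k + l + 1)).val = 0 := rfl
        by_cases hik : i.val ≤ k
        · have : A x (φ i) := by
            rw [← h0, ← hA]; unfold StarArc; left; omega
          simp [hi0, hik, NP, this, hb]
        · have : A (φ i) x := by
            rw [← h0, ← hA]; unfold StarArc; right; omega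
          simp [hi0, hik, NM, this, hb]
    _ = _ := by
        rw [Fintype.card_piFinset]
        apply prod_congr rfl
        intro i _
        split_ifs <;> simp

end counting

lemma OPT_low (k l : ℕ) (hl : 1 ≤ l) (hlk : l ≤ k) :
    ((k : ℝ) ^ k * (l : ℝ) ^ l / ((k : ℝ) + l) ^ (k + l)) *
        (((k:ℝ) + l) / ((k:ℝ) + l + 1)) ^ (k + l) ≤ ((k:ℝ) + l + 1) * OPT k l := by
  have hl' : (1:ℝ) ≤ l := by exact_mod_cast hl
  have hk' : (1:ℝ) ≤ k := by exact_mod_cast (hl.trans hlk)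
  set a : ℝ := 1 / ((k:ℝ) + l + 1) with ha
  have ha0 : 0 ≤ a := by positivity
  have ha1 : a ≤ 1/2 := by
    rw [ha]; apply one_div_le_one_div_of_le <;> linarith
  have h1a : 1 - a = ((k:ℝ) + l) / ((k:ℝ) + l + 1) := by rw [ha]; field_simp; ring
  have haK : ((k:ℝ) + l + 1) * a = 1 := by rw [ha]; field_simp
  have hK : (0:ℝ) < (k:ℝ) + l + 1 := by positivity
  unfold OPT
  split_ifs with hkl
  · subst hkl
    have hb : BddAbove {y : ℝ | ∃ a ∈ Set.Icc (0 : ℝ) 1,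
        y = a * (1 - a) ^ (2 * k) + (1 - a) * a ^ (2 * k)} := by
      refine ⟨2, ?_⟩
      rintro y ⟨b, ⟨hb0, hb1⟩, rfl⟩
      have e1 : (1 - b) ^ (2 * k) ≤ 1 := pow_le_one₀ (by linarith) (by linarith)
      have e2 : b ^ (2 * k) ≤ 1 := pow_le_one₀ (by linarith) (by linarith)
      have e3 : b * (1 - b) ^ (2 * k) ≤ b * 1 := mul_le_mul_of_nonneg_left e1 hb0
      have e4 : (1 - b) * b ^ (2 * k) ≤ (1 - b) * 1 :=
        mul_le_mul_of_nonneg_left e2 (by linarith)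
      linarith
    have h := le_csSup hb ⟨a, ⟨ha0, by linarith⟩, rfl⟩
    have h2 : a * (1 - a) ^ (2 * k) ≤ a * (1 - a) ^ (2 * k) + (1 - a) * a ^ (2 * k) := by
      have : 0 ≤ (1 - a) * a ^ (2 * k) := mul_nonneg (by linarith) (by positivity)
      linarith
    have h3 := h2.trans h
    rw [← h1a]
    have e : (k:ℝ)^k * (k:ℝ)^k / ((k:ℝ) + k)^(k + k) = 1 / 2^(2*k) := by
      rw [← two_mul, ← two_mul, mul_pow, ← pow_add, two_mul k]
      field_simp
    rw [e]
    calc 1 / 2^(2*k) * (1 - a)^(k + k)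
        = ((k:ℝ) + k + 1) * a * (1 / 2^(2*k) * (1 - a)^(2*k)) := by
          rw [haK, one_mul, two_mul k]
      _ = ((k:ℝ) + k + 1) * (1 / 2^(2*k) * (a * (1 - a)^(2*k))) := by ring
      _ ≤ _ := by gcongr
  · set c : ℝ := (((k : ℝ) - 1) ^ (k - 1) * (l : ℝ) ^ l / ((k : ℝ) + (l : ℝ) - 1) ^ (k + l - 1))
      with hc
    have hc0 : 0 ≤ c := by
      apply div_nonneg
      · exact mul_nonneg (pow_nonneg (by linarith) _) (by positivity)
      · exact pow_nonneg (by linarith) _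
    have hkl1 : (k:ℝ) / ((k:ℝ) + l) ≤ 1 := by
      rw [div_le_one (by positivity)]; linarith
    have hb : BddAbove {y : ℝ | ∃ a ∈ Set.Icc (0 : ℝ) (1 / 2),
      ∃ d ∈ Set.Icc (0 : ℝ) ((k : ℝ) / ((k : ℝ) + (l : ℝ))),
      y = a * (1 - a) ^ (k + l) * d ^ k * (1 - d) ^ l
        + c * (1 - a) * a ^ (k + l) * (1 - d)} := by
      refine ⟨1 + c, ?_⟩
      rintro y ⟨b, ⟨hb0, hb1⟩, d, ⟨hd0, hd1⟩, rfl⟩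
      have hd2 : d ≤ 1 := hd1.trans hkl1
      have e1 : (1 - b) ^ (k + l) ≤ 1 := pow_le_one₀ (by linarith) (by linarith)
      have e2 : b ^ (k + l) ≤ 1 := pow_le_one₀ (by linarith) (by linarith)
      have e3 : d ^ k ≤ 1 := pow_le_one₀ (by linarith) (by linarith)
      have e4 : (1 - d) ^ l ≤ 1 := pow_le_one₀ (by linarith) (by linarith)
      have p1 : 0 ≤ (1 - b) ^ (k + l) := pow_nonneg (by linarith) _
      have p4 : 0 ≤ (1 - d) ^ l := pow_nonneg (by linarith) _
      have q1 : b * (1 - b) ^ (k + l) * d ^ k * (1 - d) ^ l ≤ 1 :=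
        mul_le_one₀ (mul_le_one₀ (mul_le_one₀ (by linarith) p1 e1) (by positivity) e3) p4 e4
      have q2 : (1 - b) * b ^ (k + l) * (1 - d) ≤ 1 :=
        mul_le_one₀ (mul_le_one₀ (by linarith) (by positivity) e2) (by linarith) (by linarith)
      have q3 := mul_le_mul_of_nonneg_left q2 hc0
      have q4 : c * (1 - b) * b ^ (k + l) * (1 - d) = c * ((1 - b) * b ^ (k + l) * (1 - d)) := by
        ring
      linarith
    have h := le_csSup hb ⟨a, ⟨ha0, ha1⟩, (k:ℝ)/((k:ℝ)+l), ⟨by positivity, le_rfl⟩, rfl⟩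
    have hd : 1 - (k:ℝ)/((k:ℝ)+l) = (l:ℝ)/((k:ℝ)+l) := by field_simp; ring
    have h2 : 0 ≤ c * (1 - a) * a ^ (k + l) * (1 - (k:ℝ)/((k:ℝ)+l)) :=
      mul_nonneg (mul_nonneg (mul_nonneg hc0 (by linarith)) (by positivity)) (by linarith)
    have h3 := (le_add_of_nonneg_right h2).trans h
    refine le_trans (le_of_eq ?_) (mul_le_mul_of_nonneg_left h3 hK.le)
    rw [hd, ← h1a, div_pow, div_pow]
    calc _ = ((k:ℝ) + l + 1) * a * ((k:ℝ)^k * (l:ℝ)^l / ((k:ℝ)+l)^(k+l) * (1 - a)^(k+l)) := by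
          rw [haK, one_mul]
      _ = _ := by rw [pow_add ((k:ℝ)+l)]; field_simp

section assembly
open Classical Finset
variable {V : Type} [Fintype V]

lemma sCond_eq (k l : ℕ) (A : V → V → Prop) (z : Fin (k + l + 1)) (v : V) :
    sCond k l A z v = ((univ.filter fun φ : Fin (k + l + 1) → V =>
      IsStarEmb k l A φ ∧ φ z = v).card : ℝ) / (Fintype.card V : ℝ) ^ (k + l) := by
  unfold sCond
  rw [Nat.card_eq_fintype_card, Fintype.card_subtype]

lemma div_help (m : ℕ) (hm : 1 ≤ m) (n c P lam D : ℝ) (hn : 0 < n)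
    (h : c ≤ P * (lam * D ^ (m - 1))) :
    c / n ^ m ≤ (P / n) * (lam * (D / n) ^ (m - 1)) := by
  obtain ⟨u, rfl⟩ : ∃ u, m = u + 1 := ⟨m - 1, by omega⟩
  simp only [Nat.add_sub_cancel] at h ⊢
  rw [div_le_iff₀ (by positivity)]
  refine h.trans (le_of_eq ?_)
  rw [div_pow, pow_succ]; field_simp

lemma leaf_out (k l : ℕ) (hk : 1 ≤ k) (A : V → V → Prop) (hopp : ∀ u v, A u v → ¬ A v u)
    (hn : 1 ≤ Fintype.card V)
    (j : Fin (k + l + 1)) (hj : 1 ≤ j.val) (hj2 : j.val ≤ k) (v : V) :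
    sCond k l A j v ≤ (((NM A v).card : ℝ) / Fintype.card V) *
      ((((k:ℝ) - 1) ^ (k - 1) * (l:ℝ) ^ l / ((k:ℝ) + l - 1) ^ (k + l - 1)) *
        (((Fintype.card V : ℝ) - (NB A v).card) / Fintype.card V) ^ (k + l - 1)) := by
  have hn' : (0:ℝ) < Fintype.card V := by exact_mod_cast hn
  rw [sCond_eq]
  apply div_help _ (by omega) _ _ _ _ _ hn'
  have hsub : (univ.filter fun φ : Fin (k + l + 1) → V => IsStarEmb k l A φ ∧ φ j = v) ⊆
      (NM A v).biUnion fun u => univ.filter fun φ : Fin (k + l + 1) → V =>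
        IsStarEmb k l A φ ∧ φ 0 = u ∧ φ j = v := by
    intro φ hφ
    simp only [mem_filter, mem_univ, true_and] at hφ
    simp only [mem_biUnion, mem_filter, mem_univ, true_and]
    refine ⟨φ 0, ?_, hφ.1, rfl, hφ.2⟩
    simp only [NM, mem_filter, mem_univ, true_and]
    rw [← hφ.2, ← hφ.1.2]
    exact Or.inl ⟨rfl, hj, hj2⟩
  calc _ ≤ ((∑ u ∈ NM A v, (univ.filter fun φ : Fin (k + l + 1) → V =>
        IsStarEmb k l A φ ∧ φ 0 = u ∧ φ j = v).card : ℕ) : ℝ) := by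
        exact_mod_cast (card_le_card hsub).trans card_biUnion_le
    _ ≤ _ := by
        push_cast
        rw [← nsmul_eq_mul]
        exact sum_le_card_nsmul _ _ _ fun u _ => pair_out k l hk A hopp j hj hj2 u v

lemma leaf_in (k l : ℕ) (hl : 1 ≤ l) (A : V → V → Prop) (hopp : ∀ u v, A u v → ¬ A v u)
    (hn : 1 ≤ Fintype.card V)
    (j : Fin (k + l + 1)) (hj : k + 1 ≤ j.val) (v : V) :
    sCond k l A j v ≤ (((NP A v).card : ℝ) / Fintype.card V) *
      (((k:ℝ) ^ k * ((l:ℝ) - 1) ^ (l - 1) / ((k:ℝ) + l - 1) ^ (k + l - 1)) *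
        (((Fintype.card V : ℝ) - (NB A v).card) / Fintype.card V) ^ (k + l - 1)) := by
  have hn' : (0:ℝ) < Fintype.card V := by exact_mod_cast hn
  rw [sCond_eq]
  apply div_help _ (by omega) _ _ _ _ _ hn'
  have hsub : (univ.filter fun φ : Fin (k + l + 1) → V => IsStarEmb k l A φ ∧ φ j = v) ⊆
      (NP A v).biUnion fun u => univ.filter fun φ : Fin (k + l + 1) → V =>
        IsStarEmb k l A φ ∧ φ 0 = u ∧ φ j = v := by
    intro φ hφ
    simp only [mem_filter, mem_univ, true_and] at hφ
    simp only [mem_biUnion, mem_filter, mem_univ, true_and]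
    refine ⟨φ 0, ?_, hφ.1, rfl, hφ.2⟩
    simp only [NP, mem_filter, mem_univ, true_and]
    rw [← hφ.2, ← hφ.1.2]
    exact Or.inr ⟨rfl, hj⟩
  calc _ ≤ ((∑ u ∈ NP A v, (univ.filter fun φ : Fin (k + l + 1) → V =>
        IsStarEmb k l A φ ∧ φ 0 = u ∧ φ j = v).card : ℕ) : ℝ) := by
        exact_mod_cast (card_le_card hsub).trans card_biUnion_le
    _ ≤ _ := by
        push_cast
        rw [← nsmul_eq_mul]
        exact sum_le_card_nsmul _ _ _ fun u _ => pair_in k l hl A hopp j hj u v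

lemma center_le (k l : ℕ) (A : V → V → Prop) (hn : 1 ≤ Fintype.card V) (x : V) :
    sCond k l A 0 x ≤ (((NP A x).card : ℝ) / Fintype.card V) ^ k *
      (((NM A x).card : ℝ) / Fintype.card V) ^ l := by
  have hn' : (0:ℝ) < Fintype.card V := by exact_mod_cast hn
  rw [sCond_eq, div_pow, div_pow, div_mul_div_comm, ← pow_add]
  have h := center_nat k l A x univ
  simp only [mem_univ, implies_true, and_true, inter_univ] at h
  have h' : ((univ.filter fun φ : Fin (k + l + 1) → V =>
      IsStarEmb k l A φ ∧ φ 0 = x).card : ℝ) ≤ ((NP A x).card : ℝ) ^ k * ((NM A x).card : ℝ)^l := by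
    exact_mod_cast h
  gcongr

lemma center_le2 (k l : ℕ) (hk : 1 ≤ k) (hl : 1 ≤ l) (A : V → V → Prop)
    (hopp : ∀ u v, A u v → ¬ A v u) (hn : 1 ≤ Fintype.card V) (x : V) (X : Finset V)
    (hX : ∀ w ∈ X, (Fintype.card V : ℝ) - (NB A w).card ≤ (Fintype.card V : ℝ) * (1/2)) :
    sCond k l A 0 x ≤ (((NP A x ∩ Xᶜ).card : ℝ) / Fintype.card V) ^ k *
      (((NM A x ∩ Xᶜ).card : ℝ) / Fintype.card V) ^ l
      + l * ((((NM A x ∩ X).card : ℝ) / Fintype.card V) *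
        ((k:ℝ) ^ k * ((l:ℝ) - 1) ^ (l - 1) / ((k:ℝ) + l - 1) ^ (k + l - 1)
          * (1/2) ^ (k + l - 1)))
      + k * ((((NP A x ∩ X).card : ℝ) / Fintype.card V) *
        (((k:ℝ) - 1) ^ (k - 1) * (l:ℝ) ^ l / ((k:ℝ) + l - 1) ^ (k + l - 1)
          * (1/2) ^ (k + l - 1))) := by
  have hn' : (0:ℝ) < Fintype.card V := by exact_mod_cast hn
  have hl' : (1:ℝ) ≤ l := by exact_mod_cast hl
  have hk' : (1:ℝ) ≤ k := by exact_mod_cast hk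
  set n : ℝ := (Fintype.card V : ℝ) with hnd
  set li : ℝ := (k:ℝ) ^ k * ((l:ℝ) - 1) ^ (l - 1) / ((k:ℝ) + l - 1) ^ (k + l - 1) with hli
  set lo : ℝ := ((k:ℝ) - 1) ^ (k - 1) * (l:ℝ) ^ l / ((k:ℝ) + l - 1) ^ (k + l - 1) with hlo
  have hli0 : 0 ≤ li := div_nonneg (mul_nonneg (by positivity) (pow_nonneg (by linarith) _))
    (pow_nonneg (by linarith) _)
  have hlo0 : 0 ≤ lo := div_nonneg (mul_nonneg (pow_nonneg (by linarith) _) (by positivity))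
    (pow_nonneg (by linarith) _)
  let S0 : Finset (Fin (k + l + 1) → V) := univ.filter fun φ => IsStarEmb k l A φ ∧ φ 0 = x ∧
      ∀ j : Fin (k + l + 1), 1 ≤ j.val → φ j ∈ Xᶜ
  let T : Fin (k + l + 1) → V → Finset (Fin (k + l + 1) → V) := fun j w =>
    univ.filter fun φ => IsStarEmb k l A φ ∧ φ 0 = x ∧ φ j = w
  let jo : Fin k → Fin (k + l + 1) := fun i => Fin.succ (Fin.castAdd l i)
  let ji : Fin l → Fin (k + l + 1) := fun i => Fin.succ (Fin.natAdd k i)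
  let So := (univ : Finset (Fin k)).biUnion fun i => (NP A x ∩ X).biUnion fun w => T (jo i) w
  let Si := (univ : Finset (Fin l)).biUnion fun i => (NM A x ∩ X).biUnion fun w => T (ji i) w
  have hsub : (univ.filter fun φ : Fin (k + l + 1) → V => IsStarEmb k l A φ ∧ φ 0 = x) ⊆
      S0 ∪ Si ∪ So := by
    intro φ hφ
    simp only [mem_filter, mem_univ, true_and] at hφ
    by_cases hall : ∀ j : Fin (k + l + 1), 1 ≤ j.val → φ j ∈ Xᶜ
    · apply mem_union_left; apply mem_union_left
      simp only [S0, mem_filter, mem_univ, true_and]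
      exact ⟨hφ.1, hφ.2, hall⟩
    · push Not at hall
      obtain ⟨j, hj, hjX⟩ := hall
      have hjX' : φ j ∈ X := by simpa using hjX
      by_cases hjk : j.val ≤ k
      · apply mem_union_right
        simp only [So, mem_biUnion, mem_univ, true_and]
        have e : jo ⟨j.val - 1, by omega⟩ = j := by ext; simp [jo]; omega
        refine ⟨⟨j.val - 1, by omega⟩, φ j, ?_, ?_⟩
        · simp only [NP, mem_inter, mem_filter, mem_univ, true_and]
          refine ⟨?_, hjX'⟩
          rw [← hφ.2, ← hφ.1.2]
          exact Or.inl ⟨rfl, hj, hjk⟩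
        · simp only [T, mem_filter, mem_univ, true_and]
          exact ⟨hφ.1, hφ.2, by rw [e]⟩
      · apply mem_union_left; apply mem_union_right
        simp only [Si, mem_biUnion, mem_univ, true_and]
        have e : ji ⟨j.val - (k + 1), by omega⟩ = j := by ext; simp [ji]; omega
        refine ⟨⟨j.val - (k + 1), by omega⟩, φ j, ?_, ?_⟩
        · simp only [NM, mem_inter, mem_filter, mem_univ, true_and]
          refine ⟨?_, hjX'⟩
          rw [← hφ.2, ← hφ.1.2]
          exact Or.inr ⟨rfl, by omega⟩
        · simp only [T, mem_filter, mem_univ, true_and]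
          exact ⟨hφ.1, hφ.2, by rw [e]⟩
  have hpw : ∀ w ∈ X, (n - (NB A w).card) ^ (k + l - 1) ≤ (n * (1/2)) ^ (k + l - 1) := by
    intro w hw
    apply pow_le_pow_left₀ _ (hX w hw)
    have : ((NB A w).card : ℝ) ≤ Fintype.card V := by exact_mod_cast card_le_univ _
    linarith
  have hSo : (So.card : ℝ) ≤ k * ((NP A x ∩ X).card * (lo * (n * (1/2)) ^ (k + l - 1))) := by
    have h1 : (So.card : ℝ) ≤ ∑ i : Fin k, ∑ w ∈ NP A x ∩ X, ((T (jo i) w).card : ℝ) := by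
      exact_mod_cast card_biUnion_le.trans (sum_le_sum fun i _ => card_biUnion_le)
    refine h1.trans ?_
    have h2 : ∀ i ∈ (univ : Finset (Fin k)), ∑ w ∈ NP A x ∩ X, ((T (jo i) w).card : ℝ) ≤
        (NP A x ∩ X).card * (lo * (n * (1/2)) ^ (k + l - 1)) := by
      intro i _
      rw [← nsmul_eq_mul]
      apply sum_le_card_nsmul
      intro w hw
      refine (pair_out k l hk A hopp (jo i) (by simp [jo]) (by simp [jo]) x w).trans ?_
      exact mul_le_mul_of_nonneg_left (hpw w (mem_inter.1 hw).2) hlo0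
    have h3 := sum_le_card_nsmul _ _ _ h2
    rw [nsmul_eq_mul, card_univ, Fintype.card_fin] at h3
    exact h3
  have hSi : (Si.card : ℝ) ≤ l * ((NM A x ∩ X).card * (li * (n * (1/2)) ^ (k + l - 1))) := by
    have h1 : (Si.card : ℝ) ≤ ∑ i : Fin l, ∑ w ∈ NM A x ∩ X, ((T (ji i) w).card : ℝ) := by
      exact_mod_cast card_biUnion_le.trans (sum_le_sum fun i _ => card_biUnion_le)
    refine h1.trans ?_
    have h2 : ∀ i ∈ (univ : Finset (Fin l)), ∑ w ∈ NM A x ∩ X, ((T (ji i) w).card : ℝ) ≤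
        (NM A x ∩ X).card * (li * (n * (1/2)) ^ (k + l - 1)) := by
      intro i _
      rw [← nsmul_eq_mul]
      apply sum_le_card_nsmul
      intro w hw
      refine (pair_in k l hl A hopp (ji i) (by simp [ji]) x w).trans ?_
      exact mul_le_mul_of_nonneg_left (hpw w (mem_inter.1 hw).2) hli0
    have h3 := sum_le_card_nsmul _ _ _ h2
    rw [nsmul_eq_mul, card_univ, Fintype.card_fin] at h3
    exact h3
  have hS0 : (S0.card : ℝ) ≤ ((NP A x ∩ Xᶜ).card : ℝ) ^ k * ((NM A x ∩ Xᶜ).card : ℝ) ^ l := by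
    exact_mod_cast center_nat k l A x Xᶜ
  have htot : ((univ.filter fun φ : Fin (k + l + 1) → V =>
      IsStarEmb k l A φ ∧ φ 0 = x).card : ℝ) ≤ S0.card + Si.card + So.card := by
    have h1 := (card_le_card hsub).trans (card_union_le _ _)
    have h2 := card_union_le S0 Si
    exact_mod_cast h1.trans (Nat.add_le_add_right h2 _)
  rw [sCond_eq, div_le_iff₀ (by positivity)]
  have htot2 := htot.trans (add_le_add (add_le_add hS0 hSi) hSo)
  refine htot2.trans (le_of_eq ?_)
  obtain ⟨u, hu⟩ : ∃ u, k + l = u + 1 := ⟨k + l - 1, by omega⟩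
  have e1 : n ^ (k + l) = n * n ^ (k + l - 1) := by rw [← pow_succ']; congr 1; omega
  have e2 : ((NP A x ∩ Xᶜ).card : ℝ) ^ k * ((NM A x ∩ Xᶜ).card : ℝ) ^ l =
      (((NP A x ∩ Xᶜ).card : ℝ) / n) ^ k * (((NM A x ∩ Xᶜ).card : ℝ) / n) ^ l * n ^ (k + l) := by
    rw [div_pow, div_pow, pow_add]; field_simp
  rw [e2, add_mul, add_mul, mul_pow]
  congr 1
  · congr 1
    rw [e1]; field_simp
  · rw [e1]; field_simp

lemma rho_eq (A : V → V → Prop) (v : V) : rho A v = ((NB A v).card : ℝ) / Fintype.card V := by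
  unfold rho NB
  rw [Nat.card_eq_fintype_card, Fintype.card_subtype]

lemma card_split (S X : Finset V) : ((S ∩ X).card : ℝ) + (S ∩ Xᶜ).card = S.card := by
  have : (S ∩ X).card + (S ∩ Xᶜ).card = S.card := by
    rw [← sdiff_eq_inter_compl]
    exact card_inter_add_card_sdiff S X
  exact_mod_cast this

lemma disj_le (A : V → V → Prop) (hopp : ∀ u v, A u v → ¬ A v u) (x : V) (B : Finset V) :
    ((NP A x ∩ B).card : ℝ) + (NM A x ∩ B).card ≤ B.card := by
  have hd : Disjoint (NP A x ∩ B) (NM A x ∩ B) := by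
    rw [Finset.disjoint_left]
    intro y hx hy
    simp only [NP, NM, mem_inter, mem_filter, mem_univ, true_and] at hx hy
    exact hopp _ _ hx.1 hy.1
  have : (NP A x ∩ B).card + (NM A x ∩ B).card ≤ B.card := by
    rw [← card_union_of_disjoint hd]
    apply card_le_card
    intro y hy
    simp only [mem_union, mem_inter] at hy
    tauto
  exact_mod_cast this

lemma NB_card (A : V → V → Prop) (hopp : ∀ u v, A u v → ¬ A v u) (x : V) :
    ((NB A x).card : ℝ) = (NP A x).card + (NM A x).card := by
  have hd : Disjoint (NP A x) (NM A x) := by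
    rw [Finset.disjoint_left]
    intro y hx hy
    simp only [NP, NM, mem_filter, mem_univ, true_and] at hx hy
    exact hopp _ _ hx hy
  have : NB A x = NP A x ∪ NM A x := by
    ext y; simp [NB, NP, NM]
  rw [this, card_union_of_disjoint hd]; push_cast; rfl

lemma main_point (k l : ℕ) (hl : 1 ≤ l) (hlk : l ≤ k) (hm : 6 ≤ k + l)
    (A : V → V → Prop)
    (hopp : ∀ u v, A u v → ¬ A v u) (hn : 1 ≤ Fintype.card V)
    (hvert : ∀ v : V, OPT k l ≤ sVert k l A v) (x : V) (hx : x ∈ bigX A) :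
    alphaX A / 2 ≤ rhoMIn A (bigY A) x := by
  by_contra hcon
  push Not at hcon
  have hn' : (0:ℝ) < Fintype.card V := by exact_mod_cast hn
  set n : ℝ := (Fintype.card V : ℝ) with hnd
  let X : Finset V := univ.filter fun v => v ∈ bigX A
  have hα : alphaX A = (X.card : ℝ) / n := by
    unfold alphaX muSet
    rw [Nat.card_eq_fintype_card, Fintype.card_subtype]
  have hqY : rhoMIn A (bigY A) x = ((NM A x ∩ Xᶜ).card : ℝ) / n := by
    unfold rhoMIn
    rw [Nat.card_eq_fintype_card, Fintype.card_subtype]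
    congr 3
    ext y
    simp [NM, X, bigY]
  have hXc : ((Xᶜ).card : ℝ) = n - X.card := by
    rw [card_compl, Nat.cast_sub (card_le_univ _)]
  have hrx : 1 / 2 ≤ ((NB A x).card : ℝ) / n := by
    have : 1/2 ≤ rho A x := hx
    rwa [rho_eq] at this
  have sP : (((NP A x ∩ X).card : ℝ) / n + ((NP A x ∩ Xᶜ).card : ℝ) / n)
      = ((NP A x).card : ℝ) / n := by rw [← add_div, card_split]
  have sM : (((NM A x ∩ X).card : ℝ) / n + ((NM A x ∩ Xᶜ).card : ℝ) / n)
      = ((NM A x).card : ℝ) / n := by rw [← add_div, card_split]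
  have sN : ((NP A x).card : ℝ) / n + ((NM A x).card : ℝ) / n = ((NB A x).card : ℝ) / n := by
    rw [← add_div, NB_card A hopp]
  have s1 : (n - (NB A x).card) / n = 1 - ((NB A x).card : ℝ) / n := by
    field_simp
  refine final k l hl hlk hm (((NP A x ∩ X).card : ℝ) / n) (((NP A x ∩ Xᶜ).card : ℝ) / n)
    (((NM A x ∩ X).card : ℝ) / n) (((NM A x ∩ Xᶜ).card : ℝ) / n) (alphaX A) (sCond k l A 0 x)
    (by positivity) (by positivity) (by positivity) (by positivity) ?_ ?_ ?_ ?_ ?_ ?_ ?_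
  · rw [hα, ← add_div]
    exact div_le_div_of_nonneg_right (disj_le A hopp x X) hn'.le
  · rw [hα, ← add_div, show 1 - (X.card : ℝ) / n = (n - X.card) / n by field_simp, ← hXc]
    exact div_le_div_of_nonneg_right (disj_le A hopp x Xᶜ) hn'.le
  · rw [← hqY]; exact hcon.le
  · rw [sP, sM, sN]; exact hrx
  · rw [sP, sM, sN, ← s1]
    refine (OPT_low k l hl hlk).trans ?_
    have h1 := mul_le_mul_of_nonneg_left (hvert x) (show (0:ℝ) ≤ (k:ℝ) + l + 1 by positivity)
    refine h1.trans ?_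
    unfold sVert
    rw [mul_div_cancel₀ _ (by positivity)]
    have v1 : (1 : Fin (k + l + 1)).val = 1 := by
      rw [Fin.val_one']; exact Nat.mod_eq_of_lt (by omega)
    have v2 : (Fin.ofNat (k + l + 1) (k + 1)).val = k + 1 := by
      simp [Fin.ofNat]; omega
    have a1 := leaf_out k l (by omega) A hopp hn 1 (by rw [v1]) (by rw [v1]; omega) x
    have a2 := leaf_in k l hl A hopp hn (Fin.ofNat (k + l + 1) (k + 1)) (by rw [v2]) x
    have b1 := mul_le_mul_of_nonneg_left a1 (Nat.cast_nonneg (α := ℝ) k)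
    have b2 := mul_le_mul_of_nonneg_left a2 (Nat.cast_nonneg (α := ℝ) l)
    exact add_le_add (add_le_add le_rfl b2) b1
  · rw [sP, sM]; exact center_le k l A hn x
  · apply center_le2 k l (by omega) hl A hopp hn x X
    intro w hw
    have hw' : w ∈ bigX A := by simpa [X] using hw
    have : 1/2 ≤ rho A w := hw'
    rw [rho_eq, le_div_iff₀ hn'] at this
    linarith

end assembly

theorem stmt14 (k l : ℕ) (hl : 1 ≤ l) (hlk : l ≤ k) (hm : 6 ≤ k + l)
    (V : Type) [Fintype V] (A : V → V → Prop)
    (hirr : Irreflexive A) (hopp : ∀ u v, A u v → ¬ A v u) (hn : 1 ≤ Fintype.card V)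
    (hvert : ∀ v : V, OPT k l ≤ sVert k l A v) (hX : (bigX A).Nonempty) :
    gammaX A ≥ alphaX A / 2 := by
  unfold gammaX
  apply le_csInf (hX.image _)
  rintro _ ⟨x, hx, rfl⟩
  exact main_point k l hl hlk hm A hopp hn hvert x hx
end
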